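/- arXiv:1806.07020 — 3 statements merged into one kernel-verified Lean document; each statement's English description precedes it below -/
import Mathlib

section
/- Let ℍ be the hyperbolic plane (the upper half-plane with its hyperbolic metric). Let A ⊆ ℍ and a ∈ A be such that A is starlike with respect to a: for every z ∈ A, every point w with dist(a,w) + dist(w,z) = dist(a,z) belongs to A. Then A is arccosh(√2)-quasiconvex: for all z₁, z₂ ∈ A, every point w with dist(z₁,w) + dist(w,z₂) = dist(z₁,z₂) satisfies infDist(w, A) ≤ arccosh(√2) = log(1+√2). -/
open UpperHalfPlane

/-!
In a CAT(-1) space, let `w` lie on the side `[x, y]` of a triangle `a x y`. The comparison angles at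
`w` in the triangles `a w x` and `a w y` add up to at least `π`, so one of them, say the first, is
at least `π / 2`, that is, `cosh (dist a w) * cosh (dist w x) ≤ cosh (dist a x)`. Let `p` be the
point of `[a, x]` with weights `s = cosh (dist w x)` at `a` and `t = cosh (dist a w)` at `x`; the
normalising factor `N` satisfies `N ^ 2 ≥ 2 * s * t * cosh (dist a x) ≥ 2 * (s * t) ^ 2`, so
`cosh (dist w p) ≤ 2 * s * t / N ≤ √2`. If `A` is starlike about `a` and contains `x`, then `p`
lies in `A`.
-/

section HyperboloidNorm

/-- The Lorentz norm of `s • u + t • v`, where `u` and `v` are points of the hyperboloid model at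
hyperbolic distance `d`. -/
noncomputable def hyperboloidNorm (s t d : ℝ) : ℝ :=
  √(s ^ 2 + t ^ 2 + 2 * s * t * Real.cosh d)

variable {s t d : ℝ}

lemma hyperboloidNorm_comm (s t d : ℝ) : hyperboloidNorm s t d = hyperboloidNorm t s d := by
  unfold hyperboloidNorm
  congr 1
  ring

lemma sq_hyperboloidNorm (hs : 0 ≤ s) (ht : 0 ≤ t) :
    hyperboloidNorm s t d ^ 2 = s ^ 2 + t ^ 2 + 2 * s * t * Real.cosh d :=
  Real.sq_sqrt (by positivity)

lemma hyperboloidNorm_pos (hs : 0 ≤ s) (ht : 0 ≤ t) (hst : 0 < s + t) :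
    0 < hyperboloidNorm s t d := by
  refine Real.sqrt_pos.2 ?_
  have hcosh : 0 ≤ 2 * s * t * (Real.cosh d - 1) :=
    mul_nonneg (by positivity) (sub_nonneg.2 (Real.one_le_cosh d))
  nlinarith [pow_pos hst 2]

lemma hyperboloidNorm_sinh_sinh {u v : ℝ} (huv : 0 ≤ u + v) :
    hyperboloidNorm (Real.sinh v) (Real.sinh u) (u + v) = Real.sinh (u + v) := by
  rw [hyperboloidNorm, ← Real.sqrt_sq (Real.sinh_nonneg_iff.2 huv), Real.cosh_add, Real.sinh_add]
  congr 1
  linear_combination -Real.sinh v ^ 2 * Real.cosh_sq u - Real.sinh u ^ 2 * Real.cosh_sq v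

lemma sqrt_two_mul_le_hyperboloidNorm (hs : 0 ≤ s) (ht : 0 ≤ t) (h : s * t ≤ Real.cosh d) :
    √2 * (s * t) ≤ hyperboloidNorm s t d := by
  refine Real.le_sqrt_of_sq_le ?_
  rw [mul_pow, Real.sq_sqrt zero_le_two]
  nlinarith [mul_le_mul_of_nonneg_left h (mul_nonneg hs ht), sq_nonneg s, sq_nonneg t]

lemma sinh_mul_hyperboloidNorm_le {r : ℝ} (hs : 0 ≤ s) (ht : 0 ≤ t) (hd : 0 ≤ d)
    (h : Real.cosh r * hyperboloidNorm s t d ≤ s + t * Real.cosh d) :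
    Real.sinh r * hyperboloidNorm s t d ≤ t * Real.sinh d := by
  have hN : 0 ≤ hyperboloidNorm s t d := Real.sqrt_nonneg _
  have hsq : (Real.cosh r * hyperboloidNorm s t d) ^ 2 ≤ (s + t * Real.cosh d) ^ 2 := by gcongr
  refine le_of_abs_le (abs_le_of_sq_le_sq ?_ (mul_nonneg ht (Real.sinh_nonneg_iff.2 hd)))
  calc (Real.sinh r * hyperboloidNorm s t d) ^ 2
      = (Real.cosh r * hyperboloidNorm s t d) ^ 2 - hyperboloidNorm s t d ^ 2 := by
        rw [mul_pow, mul_pow, Real.cosh_sq]; ring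
    _ ≤ (s + t * Real.cosh d) ^ 2 - hyperboloidNorm s t d ^ 2 := by gcongr
    _ = (t * Real.sinh d) ^ 2 := by
        rw [sq_hyperboloidNorm hs ht, mul_pow, Real.sinh_sq]; ring

lemma add_le_of_cosh_mul_hyperboloidNorm_le {q r : ℝ} (hs : 0 ≤ s) (ht : 0 ≤ t)
    (hst : 0 < s + t) (hd : 0 ≤ d) (hr : 0 ≤ r)
    (hq_cosh : Real.cosh q * hyperboloidNorm s t d ≤ s + t * Real.cosh d)
    (hr_cosh : Real.cosh r * hyperboloidNorm s t d ≤ t + s * Real.cosh d) :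
    q + r ≤ d := by
  have hN : 0 < hyperboloidNorm s t d := hyperboloidNorm_pos hs ht hst
  have hsinh : 0 ≤ Real.sinh d := Real.sinh_nonneg_iff.2 hd
  have hsinh_r : 0 ≤ Real.sinh r := Real.sinh_nonneg_iff.2 hr
  have hq_sinh := sinh_mul_hyperboloidNorm_le hs ht hd hq_cosh
  have hr_sinh : Real.sinh r * hyperboloidNorm s t d ≤ s * Real.sinh d := by
    rw [hyperboloidNorm_comm] at hr_cosh ⊢
    exact sinh_mul_hyperboloidNorm_le ht hs hd hr_cosh
  have hcosh : Real.cosh (q + r) ≤ Real.cosh d := by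
    refine le_of_mul_le_mul_right ?_ (pow_pos hN 2)
    calc Real.cosh (q + r) * hyperboloidNorm s t d ^ 2
        = Real.cosh q * hyperboloidNorm s t d * (Real.cosh r * hyperboloidNorm s t d)
          + Real.sinh q * hyperboloidNorm s t d * (Real.sinh r * hyperboloidNorm s t d) := by
          rw [Real.cosh_add]; ring
      _ ≤ (s + t * Real.cosh d) * (t + s * Real.cosh d)
          + t * Real.sinh d * (s * Real.sinh d) := by gcongr
      _ = Real.cosh d * hyperboloidNorm s t d ^ 2 := by
          rw [sq_hyperboloidNorm hs ht]
          linear_combination s * t * Real.sinh_sq d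
  exact (le_abs_self _).trans ((Real.cosh_le_cosh.1 hcosh).trans_eq (abs_of_nonneg hd))

end HyperboloidNorm

/-- A geodesic CAT(-1) space, by comparison of the distance from a vertex to the opposite side:
unless `s = t = 0`, `p` is the point of `[x, y]` whose comparison point in the hyperboloid model is
the normalisation of `s • x + t • y`. Weights instead of distances to `x` and `y` keep the
inequality algebraic; that `p` lies between `x` and `y` follows from the cases `w = x` and
`w = y`. -/
class CATNegOneSpace (X : Type*) [PseudoMetricSpace X] : Prop where
  exists_barycenter (x y : X) {s t : ℝ} (hs : 0 ≤ s) (ht : 0 ≤ t) : ∃ p : X, ∀ w : X,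
    Real.cosh (dist w p) * hyperboloidNorm s t (dist x y) ≤
      s * Real.cosh (dist w x) + t * Real.cosh (dist w y)

namespace CATNegOneSpace

variable {X : Type*} [PseudoMetricSpace X] [CATNegOneSpace X]

lemma exists_barycenter_between (x y : X) {s t : ℝ} (hs : 0 ≤ s) (ht : 0 ≤ t) (hst : 0 < s + t) :
    ∃ p : X, dist x p + dist p y = dist x y ∧ ∀ w : X,
      Real.cosh (dist w p) * hyperboloidNorm s t (dist x y) ≤
        s * Real.cosh (dist w x) + t * Real.cosh (dist w y) := by
  obtain ⟨p, hp⟩ := exists_barycenter x y hs ht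
  refine ⟨p, le_antisymm ?_ (dist_triangle x p y), hp⟩
  refine add_le_of_cosh_mul_hyperboloidNorm_le hs ht hst dist_nonneg dist_nonneg ?_ ?_
  · simpa using hp x
  · simpa [dist_comm, add_comm] using hp y

/-- The hyperbolic Stewart theorem, as an inequality. -/
lemma cosh_dist_mul_sinh_dist_le {x y w : X} (h : dist x w + dist w y = dist x y) (a : X) :
    Real.cosh (dist a w) * Real.sinh (dist x y) ≤
      Real.sinh (dist w y) * Real.cosh (dist a x)
        + Real.sinh (dist x w) * Real.cosh (dist a y) := by
  have hxw : 0 ≤ Real.sinh (dist x w) := Real.sinh_nonneg_iff.2 dist_nonneg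
  have hwy : 0 ≤ Real.sinh (dist w y) := Real.sinh_nonneg_iff.2 dist_nonneg
  rcases (dist_nonneg (x := x) (y := y)).eq_or_lt with hxy | hxy
  · rw [← hxy, Real.sinh_zero, mul_zero]
    positivity
  obtain ⟨p, hp⟩ := exists_barycenter x y hwy hxw
  have hnorm : hyperboloidNorm (Real.sinh (dist w y)) (Real.sinh (dist x w)) (dist x y)
      = Real.sinh (dist x y) := by
    rw [← h]
    exact hyperboloidNorm_sinh_sinh (by positivity)
  rw [hnorm] at hp
  have hwp : dist p w ≤ 0 := by
    have hcosh : Real.cosh (dist w p) * Real.sinh (dist x y) ≤ 1 * Real.sinh (dist x y) := by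
      calc Real.cosh (dist w p) * Real.sinh (dist x y)
          ≤ Real.sinh (dist w y) * Real.cosh (dist w x)
            + Real.sinh (dist x w) * Real.cosh (dist w y) := hp w
        _ = 1 * Real.sinh (dist x y) := by
            rw [← h, Real.sinh_add, dist_comm w x]; ring
    have hcosh_le := le_of_mul_le_mul_right hcosh (Real.sinh_pos_iff.2 hxy)
    rw [← Real.cosh_zero, Real.cosh_le_cosh, abs_zero, dist_comm] at hcosh_le
    exact (le_abs_self _).trans hcosh_le
  have haw : dist a w ≤ dist a p := by linarith [dist_triangle a p w]
  refine le_trans ?_ (hp a)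
  gcongr
  exact Real.cosh_le_cosh.2 (abs_le_abs_of_nonneg dist_nonneg haw)

lemma cosh_dist_mul_cosh_dist_le_or {x y w : X} (h : dist x w + dist w y = dist x y) (a : X) :
    Real.cosh (dist a w) * Real.cosh (dist w x) ≤ Real.cosh (dist a x) ∨
      Real.cosh (dist a w) * Real.cosh (dist w y) ≤ Real.cosh (dist a y) := by
  by_contra! hlt
  obtain ⟨hx, hy⟩ := hlt
  have hstewart := cosh_dist_mul_sinh_dist_le h a
  rw [← h, Real.sinh_add] at hstewart
  rw [dist_comm w x] at hx
  have hwy : 0 ≤ Real.sinh (dist w y) := Real.sinh_nonneg_iff.2 dist_nonneg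
  have hxw : 0 < Real.sinh (dist x w) := by
    refine Real.sinh_pos_iff.2 (dist_nonneg.lt_of_ne fun h0 ↦ hx.not_ge ?_)
    rw [← h0, Real.cosh_zero, mul_one, Real.cosh_le_cosh]
    exact abs_le_abs_of_nonneg dist_nonneg (by linarith [dist_triangle a x w])
  refine hstewart.not_gt ?_
  calc Real.sinh (dist w y) * Real.cosh (dist a x) + Real.sinh (dist x w) * Real.cosh (dist a y)
      < Real.sinh (dist w y) * (Real.cosh (dist a w) * Real.cosh (dist x w))
        + Real.sinh (dist x w) * (Real.cosh (dist a w) * Real.cosh (dist w y)) :=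
        add_lt_add_of_le_of_lt (mul_le_mul_of_nonneg_left hx.le hwy)
          (mul_lt_mul_of_pos_left hy hxw)
    _ = Real.cosh (dist a w) * (Real.sinh (dist x w) * Real.cosh (dist w y)
        + Real.cosh (dist x w) * Real.sinh (dist w y)) := by ring

lemma exists_between_dist_le_arcosh_sqrt_two {a z w : X}
    (h : Real.cosh (dist a w) * Real.cosh (dist w z) ≤ Real.cosh (dist a z)) :
    ∃ p : X, dist a p + dist p z = dist a z ∧ dist w p ≤ Real.arcosh √2 := by
  have haw : 0 < Real.cosh (dist a w) := Real.cosh_pos _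
  have hwz : 0 < Real.cosh (dist w z) := Real.cosh_pos _
  obtain ⟨p, hp, hbary⟩ := exists_barycenter_between a z hwz.le haw.le (by positivity)
  refine ⟨p, hp, ?_⟩
  have hcosh : Real.cosh (dist w p) ≤ √2 := by
    refine le_of_mul_le_mul_right ?_
      (show 0 < √2 * (Real.cosh (dist w z) * Real.cosh (dist a w)) by positivity)
    calc Real.cosh (dist w p) * (√2 * (Real.cosh (dist w z) * Real.cosh (dist a w)))
        ≤ Real.cosh (dist w p) *
            hyperboloidNorm (Real.cosh (dist w z)) (Real.cosh (dist a w)) (dist a z) := by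
          gcongr
          exact sqrt_two_mul_le_hyperboloidNorm hwz.le haw.le (by rwa [mul_comm])
      _ ≤ Real.cosh (dist w z) * Real.cosh (dist w a)
            + Real.cosh (dist a w) * Real.cosh (dist w z) := hbary w
      _ = √2 * (√2 * (Real.cosh (dist w z) * Real.cosh (dist a w))) := by
          rw [← mul_assoc √2, Real.mul_self_sqrt zero_le_two, dist_comm w a]; ring
  rw [← Real.arcosh_cosh (dist_nonneg (x := w) (y := p))]
  exact (Real.arcosh_le_arcosh (Real.cosh_pos _) (by positivity)).2 hcosh

lemma exists_dist_le_arcosh_sqrt_two_of_triangle {x y w : X}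
    (h : dist x w + dist w y = dist x y) (a : X) :
    ∃ p : X, (dist a p + dist p x = dist a x ∨ dist a p + dist p y = dist a y) ∧
      dist w p ≤ Real.arcosh √2 := by
  rcases cosh_dist_mul_cosh_dist_le_or h a with hx | hy
  · obtain ⟨p, hp, hwp⟩ := exists_between_dist_le_arcosh_sqrt_two hx
    exact ⟨p, .inl hp, hwp⟩
  · obtain ⟨p, hp, hwp⟩ := exists_between_dist_le_arcosh_sqrt_two hy
    exact ⟨p, .inr hp, hwp⟩

end CATNegOneSpace

section HyperbolicPlane

-- `cosh (dist w z)` is linear in `(1 / z.im, z.re / z.im, ‖z‖ ^ 2 / z.im)`: these are the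
-- coordinates of `z` in the hyperboloid model, up to a linear change of coordinates.
lemma two_mul_im_mul_cosh_dist (w z : ℍ) :
    2 * w.im * Real.cosh (dist w z) =
      (w.re ^ 2 + w.im ^ 2) * (1 / z.im) - 2 * w.re * (z.re / z.im)
        + (z.re ^ 2 + z.im ^ 2) / z.im := by
  have hw : w.im ≠ 0 := w.im_ne_zero
  have hz : z.im ≠ 0 := z.im_ne_zero
  rw [UpperHalfPlane.cosh_dist']
  field_simp
  ring

lemma exists_cosh_dist_mul_hyperboloidNorm_eq (x y : ℍ) {s t : ℝ} (hs : 0 ≤ s) (ht : 0 ≤ t)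
    (hst : 0 < s + t) :
    ∃ p : ℍ, ∀ w : ℍ, Real.cosh (dist w p) * hyperboloidNorm s t (dist x y) =
      s * Real.cosh (dist w x) + t * Real.cosh (dist w y) := by
  set N := hyperboloidNorm s t (dist x y)
  set Q := s * (1 / x.im) + t * (1 / y.im) with hQ
  set R := s * (x.re / x.im) + t * (y.re / y.im) with hR
  set P := s * ((x.re ^ 2 + x.im ^ 2) / x.im) + t * ((y.re ^ 2 + y.im ^ 2) / y.im) with hP
  have hN_pos : 0 < N := hyperboloidNorm_pos hs ht hst
  have hQ_pos : 0 < Q := by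
    rcases hs.eq_or_lt with rfl | hs'
    · have : 0 < t := by simpa using hst
      positivity
    · positivity
  have hPQ : R ^ 2 + N ^ 2 = P * Q := by
    rw [sq_hyperboloidNorm hs ht, UpperHalfPlane.cosh_dist', hP, hQ, hR]
    field_simp
    ring
  obtain ⟨p, hp_re, hp_im⟩ : ∃ p : ℍ, p.re = R / Q ∧ p.im = N / Q :=
    ⟨⟨⟨R / Q, N / Q⟩, by positivity⟩, rfl, rfl⟩
  have hQ_p : 1 / p.im * N = Q := by rw [hp_im]; field_simp
  have hR_p : p.re / p.im * N = R := by rw [hp_re, hp_im]; field_simp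
  have hP_p : (p.re ^ 2 + p.im ^ 2) / p.im * N = P := by
    rw [hp_re, hp_im]
    field_simp
    linear_combination hPQ
  refine ⟨p, fun w ↦ mul_left_cancel₀ (mul_ne_zero two_ne_zero w.im_ne_zero) ?_⟩
  linear_combination N * two_mul_im_mul_cosh_dist w p - s * two_mul_im_mul_cosh_dist w x
    - t * two_mul_im_mul_cosh_dist w y + (w.re ^ 2 + w.im ^ 2) * hQ_p - 2 * w.re * hR_p + hP_p

instance : CATNegOneSpace ℍ where
  exists_barycenter x y s t hs ht := by
    rcases (add_nonneg hs ht).eq_or_lt with hst | hst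
    · obtain ⟨rfl, rfl⟩ := (add_eq_zero_iff_of_nonneg hs ht).1 hst.symm
      exact ⟨x, fun w ↦ by simp [hyperboloidNorm]⟩
    · obtain ⟨p, hp⟩ := exists_cosh_dist_mul_hyperboloidNorm_eq x y hs ht hst
      exact ⟨p, fun w ↦ (hp w).le⟩

end HyperbolicPlane

lemma arcosh_sqrt_two : Real.arcosh √2 = Real.log (1 + √2) := by
  rw [Real.arcosh, Real.sq_sqrt zero_le_two]
  norm_num [add_comm]

theorem starlike_quasiconvex_upperHalfPlane_general {X : Type*} [PseudoMetricSpace X]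
    [CATNegOneSpace X] {A : Set X} {a : X}
    (hstar : ∀ z ∈ A, ∀ w : X, dist a w + dist w z = dist a z → w ∈ A) :
    ∀ z₁ ∈ A, ∀ z₂ ∈ A, ∀ w : X, dist z₁ w + dist w z₂ = dist z₁ z₂ →
      Metric.infDist w A ≤ Real.arcosh √2 := by
  intro z₁ hz₁ z₂ hz₂ w hw
  obtain ⟨p, hp, hwp⟩ := CATNegOneSpace.exists_dist_le_arcosh_sqrt_two_of_triangle hw a
  have hpA : p ∈ A := hp.elim (hstar z₁ hz₁ p) (hstar z₂ hz₂ p)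
  exact (Metric.infDist_le_dist_of_mem hpA).trans hwp

/-- Starlike subsets of the hyperbolic plane are `arccosh √2 = log (1 + √2)`-quasiconvex
(Lemma 3.3 of the paper, applied to `X = ℍ`). -/
theorem starlike_quasiconvex_upperHalfPlane
    (A : Set UpperHalfPlane) (a : UpperHalfPlane) (ha : a ∈ A)
    (hstar : ∀ z ∈ A, ∀ w : UpperHalfPlane, dist a w + dist w z = dist a z → w ∈ A) :
    ∀ z₁ ∈ A, ∀ z₂ ∈ A, ∀ w : UpperHalfPlane,
      dist z₁ w + dist w z₂ = dist z₁ z₂ →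
        Metric.infDist w A ≤ Real.log (1 + Real.sqrt 2) :=
  arcosh_sqrt_two ▸ starlike_quasiconvex_upperHalfPlane_general hstar
end

section
/- Let ℍ be the hyperbolic plane (the upper half-plane with its hyperbolic metric). For D ≥ 0 set c(D) := 8π·tanh(D/4)/(1 − tanh(D/4)²), and for ε > 0 set 𝔯(ε) := log( (c(11ε/10) + c(ε/5)) · 30/(7ε) ). Let ε > 0, let h be a bijective self-isometry of ℍ, and suppose there is an isometric embedding γ : ℝ → ℍ (a geodesic line, the axis of h) and a real number l with 0 < l ≤ ε/10 such that h(γ(s)) = γ(s + l) for all s ∈ ℝ and τ(h) := ⨅_{x∈ℍ} dist(x, h(x)) = l. If A ∈ ℍ satisfies dist(A, h(A)) = ε, then there exist B ∈ ℍ and s₀ ∈ ℝ such that, with C := γ(s₀): dist(A,C) = infDist(A, range γ); B lies between A and C (dist(A,B) + dist(B,C) = dist(A,C)); dist(B, h(B)) = ε/3; and dist(A,B) ≤ 𝔯(ε). -/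
open UpperHalfPlane

/-- The constant `c(D) = 8π tanh(D/4) / (1 - tanh(D/4)²)` from Lemma 3.6. -/
noncomputable def cFun (D : ℝ) : ℝ :=
  8 * Real.pi * Real.tanh (D / 4) / (1 - Real.tanh (D / 4) ^ 2)

/-- The constant `𝔯(ε) = log ((c(11ε/10) + c(ε/5)) ⬝ 30/(7ε))` from Corollary 3.9. -/
noncomputable def rFun (ε : ℝ) : ℝ :=
  Real.log ((cFun (11 * ε / 10) + cFun (ε / 5)) * 30 / (7 * ε))

/-!
Fermi coordinates along the axis send `(u, s)` to the point at signed distance `u` from the axis on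
the perpendicular through its point `s`. The metric reads
`cosh d = cosh u * cosh v * cosh (s - r) - sinh u * sinh v`, and an isometry translating the axis
by `l` is `(u, s) ↦ (σ u, s + l)` for a sign `σ`. Its displacement `d` at `(u, s)` satisfies
`cosh d - σ = (cosh l - σ) * cosh u ^ 2`. Since
`cosh (3 δ) - σ = (2 * cosh δ + σ) ^ 2 * (cosh δ - σ)`, comparing the displacement `3 δ` at height
`u` with the displacement `δ` at height `v` gives `cosh u = (2 * cosh δ + σ) * cosh v`, which
bounds `|u - v|` in terms of `δ` alone.
-/

open Real Set
open scoped MatrixGroups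

section HyperbolicFunctions

lemma abs_eq_abs_of_cosh_eq {x y : ℝ} (h : cosh x = cosh y) : |x| = |y| :=
  le_antisymm (cosh_le_cosh.1 h.le) (cosh_le_cosh.1 h.ge)

lemma eq_abs_of_cosh_eq {x y : ℝ} (hx : 0 ≤ x) (h : cosh x = cosh y) : x = |y| :=
  (abs_of_nonneg hx).symm.trans (abs_eq_abs_of_cosh_eq h)

lemma sinh_three_mul_eq_mul_sinh (x : ℝ) : sinh (3 * x) = (2 * cosh (2 * x) + 1) * sinh x := by
  rw [sinh_three_mul, cosh_two_mul, cosh_sq]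
  ring

lemma cosh_three_mul_sub_eq (x : ℝ) {σ : ℝ} (hσ : |σ| = 1) :
    cosh (3 * x) - σ = (2 * cosh x + σ) ^ 2 * (cosh x - σ) := by
  have hσ_sq : σ ^ 2 = 1 := by rw [← sq_abs, hσ, one_pow]
  rw [cosh_three_mul]
  linear_combination (3 * cosh x + σ) * hσ_sq

lemma eq_and_abs_eq_of_cosh_mul_cosh_eq {u v s r t : ℝ} (ht : t ≠ 0)
    (h₀ : cosh u * cosh s = cosh v * cosh r)
    (h₁ : cosh u * cosh (s - t) = cosh v * cosh (r - t)) : s = r ∧ |u| = |v| := by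
  have hsinh : cosh u * sinh s = cosh v * sinh r := by
    rw [cosh_sub, cosh_sub] at h₁
    refine mul_right_cancel₀ (sinh_eq_zero.not.2 ht) ?_
    linear_combination cosh t * h₀ - h₁
  have huv : cosh u = cosh v := by
    refine (pow_left_inj₀ (cosh_pos u).le (cosh_pos v).le two_ne_zero).1 ?_
    linear_combination (cosh u * cosh s + cosh v * cosh r) * h₀
      - (cosh u * sinh s + cosh v * sinh r) * hsinh
      - cosh u ^ 2 * cosh_sq_sub_sinh_sq s + cosh v ^ 2 * cosh_sq_sub_sinh_sq r
  rw [huv] at hsinh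
  exact ⟨sinh_injective (mul_left_cancel₀ (cosh_pos v).ne' hsinh), abs_eq_abs_of_cosh_eq huv⟩

lemma abs_sub_le_log_of_cosh_le {u v K : ℝ} (hv : v ∈ uIcc 0 u) (hK : 0 < K)
    (h : cosh u ≤ K * cosh v) : |u - v| ≤ log (2 * K) := by
  have hadd : |u - v| + |v| = |u| := by
    rw [uIcc_comm, ← segment_eq_uIcc] at hv
    simpa only [Real.dist_eq, sub_zero] using dist_add_dist_of_mem_segment hv
  have hcosh_le : cosh v ≤ exp |v| := by
    rw [← cosh_abs, ← cosh_add_sinh]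
    exact le_add_of_nonneg_right (sinh_nonneg_iff.2 (abs_nonneg v))
  have hexp : exp |u - v| * exp |v| ≤ 2 * K * exp |v| :=
    calc exp |u - v| * exp |v| = exp |u| := by rw [← exp_add, hadd]
      _ ≤ 2 * cosh u := (exp_abs_le u).trans_eq (by rw [cosh_eq]; ring)
      _ ≤ 2 * K * cosh v := by linarith
      _ ≤ 2 * K * exp |v| := by gcongr
  rw [le_log_iff_exp_le (by positivity)]
  exact le_of_mul_le_mul_right hexp (exp_pos _)

end HyperbolicFunctions

section Constants

lemma cFun_eq (D : ℝ) : cFun D = 4 * π * sinh (D / 2) := by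
  have hcosh := (cosh_pos (D / 4)).ne'
  have htanh : 1 - tanh (D / 4) ^ 2 = 1 / cosh (D / 4) ^ 2 := by
    rw [tanh_eq_sinh_div_cosh]
    field_simp
    exact cosh_sq_sub_sinh_sq _
  rw [cFun, htanh, tanh_eq_sinh_div_cosh, show D / 2 = 2 * (D / 4) by ring, sinh_two_mul]
  field_simp
  ring

lemma log_le_rFun {ε : ℝ} (hε : 0 < ε) : log (2 * (2 * cosh (ε / 3) + 1)) ≤ rFun ε := by
  refine log_le_log (by positivity) ?_
  rw [cFun_eq, cFun_eq, le_div_iff₀ (by positivity)]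
  have hsinh : (2 * cosh (ε / 3) + 1) * (ε / 6) ≤ sinh (ε / 2) :=
    calc (2 * cosh (ε / 3) + 1) * (ε / 6)
        ≤ (2 * cosh (ε / 3) + 1) * sinh (ε / 6) := by
          gcongr
          exact self_le_sinh_iff.2 (by positivity)
      _ = sinh (ε / 2) := by
          rw [show ε / 2 = 3 * (ε / 6) by ring, sinh_three_mul_eq_mul_sinh]
          ring_nf
  have hnonneg : 0 ≤ sinh (ε / 2) := sinh_nonneg_iff.2 (by positivity)
  have hmono : sinh (ε / 2) ≤ sinh (11 * ε / 10 / 2) := sinh_le_sinh.2 (by linarith)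
  have hpos : 0 < sinh (ε / 5 / 2) := sinh_pos_iff.2 (by positivity)
  have hsum : 3 * sinh (ε / 2) ≤ π * (sinh (11 * ε / 10 / 2) + sinh (ε / 5 / 2)) :=
    mul_le_mul pi_gt_three.le (by linarith) hnonneg pi_pos.le
  linarith

end Constants

/-- Fermi coordinates on a space `X` isometric to the hyperbolic plane: `F u s` lies at signed
distance `u` from the geodesic `F 0`, on the perpendicular through `F 0 s`. -/
structure IsFermiChart {X : Type*} [PseudoMetricSpace X] (F : ℝ → ℝ → X) : Prop where
  exists_eq : ∀ z, ∃ u s, F u s = z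
  cosh_dist : ∀ u s v r,
    cosh (dist (F u s) (F v r)) = cosh u * cosh v * cosh (s - r) - sinh u * sinh v

namespace IsFermiChart

variable {X Y : Type*} [PseudoMetricSpace X] [PseudoMetricSpace Y] {F : ℝ → ℝ → X}

lemma comp_isometryEquiv (hF : IsFermiChart F) (φ : X ≃ᵢ Y) :
    IsFermiChart fun u s ↦ φ (F u s) where
  exists_eq z := by
    obtain ⟨u, s, hz⟩ := hF.exists_eq (φ.symm z)
    exact ⟨u, s, by rw [hz, φ.apply_symm_apply]⟩
  cosh_dist u s v r := by rw [φ.dist_eq, hF.cosh_dist]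

lemma cosh_dist_axis (hF : IsFermiChart F) (u s r : ℝ) :
    cosh (dist (F u s) (F 0 r)) = cosh u * cosh (s - r) := by
  simp only [hF.cosh_dist, cosh_zero, sinh_zero, mul_one, mul_zero, sub_zero]

lemma isometry_axis (hF : IsFermiChart F) : Isometry (F 0) :=
  Isometry.of_dist_eq fun s r ↦ eq_abs_of_cosh_eq dist_nonneg <| by
    rw [hF.cosh_dist_axis, cosh_zero, one_mul]

lemma isometry_perpendicular (hF : IsFermiChart F) (s : ℝ) : Isometry fun u ↦ F u s :=
  Isometry.of_dist_eq fun u v ↦ eq_abs_of_cosh_eq dist_nonneg <| by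
    rw [hF.cosh_dist, sub_self, cosh_zero, mul_one, cosh_sub]

lemma infDist_range_axis (hF : IsFermiChart F) (u s : ℝ) :
    Metric.infDist (F u s) (range (F 0)) = dist (F u s) (F 0 s) := by
  refine le_antisymm (Metric.infDist_le_dist_of_mem (mem_range_self s)) ?_
  rw [Metric.le_infDist (range_nonempty _), forall_mem_range]
  intro r
  rw [← abs_of_nonneg (dist_nonneg (x := F u s) (y := F 0 s)),
    ← abs_of_nonneg (dist_nonneg (x := F u s) (y := F 0 r)), ← cosh_le_cosh,
    hF.cosh_dist_axis, hF.cosh_dist_axis, sub_self, cosh_zero]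
  exact mul_le_mul_of_nonneg_left (one_le_cosh _) (cosh_pos u).le

lemma eq_and_abs_eq_of_dist_axis_eq (hF : IsFermiChart F) {u v s r : ℝ}
    (h₀ : dist (F u s) (F 0 0) = dist (F v r) (F 0 0))
    (h₁ : dist (F u s) (F 0 1) = dist (F v r) (F 0 1)) : s = r ∧ |u| = |v| := by
  apply_fun cosh at h₀ h₁
  rw [hF.cosh_dist_axis, hF.cosh_dist_axis] at h₀ h₁
  exact eq_and_abs_eq_of_cosh_mul_cosh_eq one_ne_zero (by simpa only [sub_zero] using h₀) h₁

lemma eq_axis_of_dist_eq (hF : IsFermiChart F) {z : X} {s : ℝ}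
    (h₀ : dist z (F 0 0) = dist s 0) (h₁ : dist z (F 0 1) = dist s 1) : z = F 0 s := by
  obtain ⟨u, r, rfl⟩ := hF.exists_eq z
  rw [← hF.isometry_axis.dist_eq] at h₀ h₁
  obtain ⟨rfl, hu⟩ := hF.eq_and_abs_eq_of_dist_axis_eq h₀ h₁
  rw [abs_zero, abs_eq_zero] at hu
  rw [hu]

section Translation

variable {h : X → X} {l : ℝ}

lemma exists_abs_eq_apply_eq_of_translate_axis (hF : IsFermiChart F) (hh : Isometry h)
    (htrans : ∀ s, h (F 0 s) = F 0 (s + l)) (u s : ℝ) :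
    ∃ v, |v| = |u| ∧ h (F u s) = F v (s + l) := by
  obtain ⟨v, r, hvr⟩ := hF.exists_eq (h (F u s))
  have hdist : ∀ t, dist (F v r) (F 0 t) = dist (F u (s + l)) (F 0 t) := by
    intro t
    refine cosh_injOn dist_nonneg dist_nonneg ?_
    calc cosh (dist (F v r) (F 0 t)) = cosh (dist (h (F u s)) (h (F 0 (t - l)))) := by
          rw [hvr, htrans, sub_add_cancel]
      _ = cosh (dist (F u (s + l)) (F 0 t)) := by
          rw [hh.dist_eq, hF.cosh_dist_axis, hF.cosh_dist_axis, sub_sub_eq_add_sub]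
  obtain ⟨rfl, hv⟩ := hF.eq_and_abs_eq_of_dist_axis_eq (hdist 0) (hdist 1)
  exact ⟨v, hv, hvr.symm⟩

lemma exists_sign_apply_eq_of_translate_axis (hF : IsFermiChart F) (hh : Isometry h)
    (htrans : ∀ s, h (F 0 s) = F 0 (s + l)) :
    ∃ σ : ℝ, |σ| = 1 ∧ ∀ u s, h (F u s) = F (σ * u) (s + l) := by
  have hcoord := hF.exists_abs_eq_apply_eq_of_translate_axis hh htrans
  obtain ⟨σ, hσ, hσ_apply⟩ := hcoord 1 0
  rw [abs_one] at hσ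
  refine ⟨σ, hσ, fun u s ↦ ?_⟩
  obtain ⟨v, hv, hv_apply⟩ := hcoord u s
  have hsinh : sinh v * sinh σ = sinh u * sinh 1 := by
    have hdist := congrArg cosh (hh.dist_eq (F u s) (F 1 0))
    rw [hσ_apply, hv_apply, hF.cosh_dist, hF.cosh_dist, add_sub_add_right_eq_sub,
      ← cosh_abs v, hv, cosh_abs, ← cosh_abs σ, hσ] at hdist
    linarith
  have hsinh_one : sinh 1 ≠ 0 := (sinh_pos_iff.2 one_pos).ne'
  rw [hv_apply]
  congr 1
  rcases eq_or_eq_neg_of_abs_eq hσ with rfl | rfl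
  · rw [one_mul]
    exact sinh_injective (mul_right_cancel₀ hsinh_one hsinh)
  · rw [sinh_neg, mul_neg, ← neg_mul, ← sinh_neg] at hsinh
    rw [neg_one_mul, ← neg_eq_iff_eq_neg]
    exact sinh_injective (mul_right_cancel₀ hsinh_one hsinh)

lemma cosh_displacement_sub (hF : IsFermiChart F) {σ : ℝ} (hσ : |σ| = 1) (u s l : ℝ) :
    cosh (dist (F u s) (F (σ * u) (s + l))) - σ = (cosh l - σ) * cosh u ^ 2 := by
  rw [hF.cosh_dist, sub_add_cancel_left, cosh_neg]
  rcases eq_or_eq_neg_of_abs_eq hσ with rfl | rfl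
  · rw [one_mul]
    linear_combination cosh_sq_sub_sinh_sq u
  · rw [neg_one_mul, cosh_neg, sinh_neg]
    linear_combination -cosh_sq_sub_sinh_sq u

lemma exists_displacement_eq (hF : IsFermiChart F) (hh : Isometry h)
    (htrans : ∀ s, h (F 0 s) = F 0 (s + l)) {δ u s : ℝ} (hl : |l| ≤ δ)
    (hδ : δ ≤ dist (F u s) (h (F u s))) :
    ∃ v ∈ uIcc 0 u, dist (F v s) (h (F v s)) = δ := by
  have hperp := (hF.isometry_perpendicular s).continuous
  have hcont : Continuous fun v ↦ dist (F v s) (h (F v s)) :=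
    hperp.dist (hh.continuous.comp hperp)
  have haxis : dist (F 0 s) (h (F 0 s)) = |l| := by
    rw [htrans, hF.isometry_axis.dist_eq, dist_self_add_right, norm_eq_abs]
  exact intermediate_value_uIcc hcont.continuousOn (mem_uIcc_of_le (haxis.trans_le hl) hδ)

lemma cosh_le_of_displacement_eq_three_mul (hF : IsFermiChart F) (hh : Isometry h)
    (htrans : ∀ s, h (F 0 s) = F 0 (s + l)) {δ u v s r : ℝ} (hδ : 0 < δ)
    (hu : dist (F u s) (h (F u s)) = 3 * δ) (hv : dist (F v r) (h (F v r)) = δ) :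
    cosh u ≤ (2 * cosh δ + 1) * cosh v := by
  obtain ⟨σ, hσ, h_apply⟩ := hF.exists_sign_apply_eq_of_translate_axis hh htrans
  obtain ⟨hσ_ge, hσ_le⟩ := abs_le.1 hσ.le
  have hδ_cosh : 1 < cosh δ := one_lt_cosh.2 hδ.ne'
  have hu_cosh := hF.cosh_displacement_sub hσ u s l
  have hv_cosh := hF.cosh_displacement_sub hσ v r l
  rw [← h_apply, hu, cosh_three_mul_sub_eq δ hσ] at hu_cosh
  rw [← h_apply, hv] at hv_cosh
  have hne : cosh l - σ ≠ 0 := left_ne_zero_of_mul (hv_cosh ▸ (by linarith : cosh δ - σ ≠ 0))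
  have hsq : cosh u ^ 2 = ((2 * cosh δ + σ) * cosh v) ^ 2 := by
    refine mul_left_cancel₀ hne ?_
    linear_combination (2 * cosh δ + σ) ^ 2 * hv_cosh - hu_cosh
  have hfactor : 0 ≤ 2 * cosh δ + σ := by linarith
  calc cosh u = (2 * cosh δ + σ) * cosh v :=
        (pow_left_inj₀ (cosh_pos u).le (by positivity) two_ne_zero).1 hsq
    _ ≤ (2 * cosh δ + 1) * cosh v := by gcongr

end Translation

end IsFermiChart

section HyperbolicPlane

/-- The point of the upper half-plane with Fermi coordinates `(u, s)` along the imaginary axis,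
which is parametrized by `s ↦ exp s * I`. -/
noncomputable def fermiPoint (u s : ℝ) : ℍ :=
  ⟨⟨exp s * tanh u, exp s / cosh u⟩, div_pos (exp_pos s) (cosh_pos u)⟩

lemma fermiPoint_re (u s : ℝ) : (fermiPoint u s).re = exp s * tanh u := rfl

lemma fermiPoint_im (u s : ℝ) : (fermiPoint u s).im = exp s / cosh u := rfl

lemma fermiPoint_zero_zero : fermiPoint 0 0 = I :=
  UpperHalfPlane.ext_re_im (by simp [fermiPoint_re]) (by simp [fermiPoint_im])

lemma isFermiChart_fermiPoint : IsFermiChart fermiPoint where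
  exists_eq z := by
    have him := z.im_pos
    have hnorm : 0 < √(z.re ^ 2 + z.im ^ 2) := sqrt_pos.2 (by positivity)
    have hcosh : cosh (arsinh (z.re / z.im)) = √(z.re ^ 2 + z.im ^ 2) / z.im := by
      rw [cosh_arsinh, div_pow, one_add_div (by positivity), sqrt_div (by positivity),
        sqrt_sq him.le, add_comm]
    refine ⟨arsinh (z.re / z.im), log √(z.re ^ 2 + z.im ^ 2), UpperHalfPlane.ext_re_im ?_ ?_⟩
    · rw [fermiPoint_re, exp_log hnorm, tanh_eq_sinh_div_cosh, sinh_arsinh, hcosh]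
      field_simp
    · rw [fermiPoint_im, exp_log hnorm, hcosh]
      field_simp
  cosh_dist u s v r := by
    rw [cosh_dist', fermiPoint_re, fermiPoint_re, fermiPoint_im, fermiPoint_im,
      tanh_eq_sinh_div_cosh, tanh_eq_sinh_div_cosh, cosh_eq (s - r), neg_sub, exp_sub, exp_sub]
    field_simp
    linear_combination (-exp s ^ 2 * cosh v ^ 2) * cosh_sq_sub_sinh_sq u
      - exp r ^ 2 * cosh u ^ 2 * cosh_sq_sub_sinh_sq v

lemma specialLinearGroup_smul_eq_iff (g : SL(2, ℝ)) (z w : ℍ) :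
    g • z = w ↔ (g 0 0 * z + g 0 1 : ℂ) = w * (g 1 0 * z + g 1 1) := by
  have hdenom : (g 1 0 * z + g 1 1 : ℂ) ≠ 0 := denom_ne_zero g z
  rw [UpperHalfPlane.ext_iff, coe_specialLinearGroup_apply, ← div_eq_iff hdenom]
  rfl

lemma exists_dotProduct_self_eq_one_mulVec_eq_zero {n : Type*} [Fintype n] [DecidableEq n]
    {M : Matrix n n ℝ} (hM : M.det = 0) : ∃ v : n → ℝ, v ⬝ᵥ v = 1 ∧ M.mulVec v = 0 := by
  obtain ⟨v, hv, hMv⟩ := Matrix.exists_mulVec_eq_zero_iff.2 hM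
  have hv_sq : v ⬝ᵥ v ≠ 0 := dotProduct_self_eq_zero.not.2 hv
  have hv_nonneg : 0 ≤ v ⬝ᵥ v := Finset.sum_nonneg fun i _ ↦ mul_self_nonneg (v i)
  refine ⟨(√(v ⬝ᵥ v))⁻¹ • v, ?_, by rw [Matrix.mulVec_smul, hMv, smul_zero]⟩
  rw [smul_dotProduct, dotProduct_smul, smul_smul, ← mul_inv, mul_self_sqrt hv_nonneg,
    smul_eq_mul, inv_mul_cancel₀ hv_sq]

lemma exists_rotation_smul_eq (z : ℍ) :
    ∃ g : SL(2, ℝ), g • I = I ∧ g • z = fermiPoint 0 (dist I z) := by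
  set E := exp (dist I z) with hE_def
  have hE : E * (z.re ^ 2 + z.im ^ 2 + 1) = z.im * (E ^ 2 + 1) := by
    have hdist := cosh_dist' I z
    have hE_pos : 0 < E := exp_pos _
    have him_pos := z.im_pos
    rw [cosh_eq, exp_neg, ← hE_def, I_re, I_im] at hdist
    field_simp at hdist
    linear_combination -hdist
  obtain ⟨v, hv, hker⟩ := exists_dotProduct_self_eq_one_mulVec_eq_zero
    (M := !![z.re, 1 - E * z.im; E - z.im, -(E * z.re)])
    (by rw [Matrix.det_fin_two_of]; linear_combination -hE)
  rw [dotProduct, Fin.sum_univ_two] at hv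
  have hre : v 0 * z.re + v 1 = E * (v 1 * z.im) := by
    have hrow : z.re * v 0 + (1 - E * z.im) * v 1 = 0 := by
      simpa [Matrix.mulVec, dotProduct] using congrFun hker 0
    linear_combination hrow
  have him : v 0 * z.im = E * (-(v 1 * z.re) + v 0) := by
    have hrow : (E - z.im) * v 0 + -(E * z.re) * v 1 = 0 := by
      simpa [Matrix.mulVec, dotProduct] using congrFun hker 1
    linear_combination -hrow
  have hdet : (!![v 0, v 1; -v 1, v 0]).det = 1 := by
    rw [Matrix.det_fin_two_of]
    linear_combination hv
  refine ⟨⟨!![v 0, v 1; -v 1, v 0], hdet⟩, (specialLinearGroup_smul_eq_iff _ _ _).2 ?_,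
    (specialLinearGroup_smul_eq_iff _ _ _).2 ?_⟩
  · apply Complex.ext <;> simp
  · apply Complex.ext <;> simpa [fermiPoint_re, fermiPoint_im]

lemma exists_isometryEquiv_apply_eq (p q : ℍ) :
    ∃ φ : ℍ ≃ᵢ ℍ, φ (fermiPoint 0 0) = p ∧ φ (fermiPoint 0 (dist p q)) = q := by
  obtain ⟨g, rfl⟩ := MulAction.exists_smul_eq SL(2, ℝ) I p
  obtain ⟨k, hkI, hkq⟩ := exists_rotation_smul_eq (g⁻¹ • q)
  have hdist : dist I (g⁻¹ • q) = dist (g • I) q := by rw [← dist_smul g, smul_inv_smul]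
  refine ⟨IsometryEquiv.constSMul (g * k⁻¹), ?_, ?_⟩
  · rw [IsometryEquiv.constSMul_apply, mul_smul, fermiPoint_zero_zero,
      inv_smul_eq_iff.2 hkI.symm]
  · rw [IsometryEquiv.constSMul_apply, mul_smul, ← hdist, ← hkq, inv_smul_smul, smul_inv_smul]

lemma exists_isFermiChart_axis_eq {γ : ℝ → ℍ} (hγ : Isometry γ) :
    ∃ F : ℝ → ℝ → ℍ, IsFermiChart F ∧ F 0 = γ := by
  obtain ⟨φ, h₀, h₁⟩ := exists_isometryEquiv_apply_eq (γ 0) (γ 1)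
  rw [hγ.dist_eq, dist_zero_left, norm_one] at h₁
  have hF := isFermiChart_fermiPoint.comp_isometryEquiv φ
  refine ⟨_, hF, funext fun s ↦ (hF.eq_axis_of_dist_eq ?_ ?_).symm⟩
  · rw [h₀, hγ.dist_eq]
  · rw [h₁, hγ.dist_eq]

end HyperbolicPlane

theorem margulis_distance_general {ε : ℝ} (hε : 0 < ε) {h : ℍ → ℍ} (hh : Isometry h)
    {γ : ℝ → ℍ} (hγ : Isometry γ) {l : ℝ} (hl : |l| ≤ ε / 3)
    (htrans : ∀ s : ℝ, h (γ s) = γ (s + l)) {A : ℍ} (hA : dist A (h A) = ε) :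
    ∃ (B : ℍ) (s₀ : ℝ),
      dist A (γ s₀) = Metric.infDist A (range γ) ∧
      dist A B + dist B (γ s₀) = dist A (γ s₀) ∧
      dist B (h B) = ε / 3 ∧
      dist A B ≤ rFun ε := by
  obtain ⟨F, hF, rfl⟩ := exists_isFermiChart_axis_eq hγ
  obtain ⟨u, s, rfl⟩ := hF.exists_eq A
  have hδ : ε / 3 ≤ dist (F u s) (h (F u s)) := by linarith only [hA, hε]
  obtain ⟨v, hv, hB⟩ := hF.exists_displacement_eq hh htrans hl hδ
  have hperp := hF.isometry_perpendicular s
  refine ⟨F v s, s, (hF.infDist_range_axis u s).symm, ?_, hB, ?_⟩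
  · rw [hperp.dist_eq, hperp.dist_eq, hperp.dist_eq]
    exact dist_add_dist_of_mem_segment (by rwa [segment_eq_uIcc, uIcc_comm])
  · have hcosh : cosh u ≤ (2 * cosh (ε / 3) + 1) * cosh v :=
      hF.cosh_le_of_displacement_eq_three_mul hh htrans (by positivity) (hA.trans (by ring)) hB
    calc dist (F u s) (F v s) = |u - v| := hperp.dist_eq u v
      _ ≤ log (2 * (2 * cosh (ε / 3) + 1)) :=
        abs_sub_le_log_of_cosh_le hv (by positivity) hcosh
      _ ≤ rFun ε := log_le_rFun hε

/-- Corollary 3.9 (margulis distance) for the hyperbolic plane: if `h` is a hyperbolic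
isometry with axis `γ` and translation length `l ≤ ε/10`, and `dist A (h A) = ε`, then
on the shortest geodesic from `A` to the axis there is a point `B` with
`dist B (h B) = ε/3` and `dist A B ≤ 𝔯(ε)`. -/
theorem margulis_distance (ε : ℝ) (hε : 0 < ε)
    (h : UpperHalfPlane ≃ᵢ UpperHalfPlane) (γ : ℝ → UpperHalfPlane) (hγ : Isometry γ)
    (l : ℝ) (hl0 : 0 < l) (hl : l ≤ ε / 10)
    (htrans : ∀ s : ℝ, h (γ s) = γ (s + l))
    (hτ : (⨅ x : UpperHalfPlane, dist x (h x)) = l)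
    (A : UpperHalfPlane) (hA : dist A (h A) = ε) :
    ∃ (B : UpperHalfPlane) (s₀ : ℝ),
      dist A (γ s₀) = Metric.infDist A (Set.range γ) ∧
      dist A B + dist B (γ s₀) = dist A (γ s₀) ∧
      dist B (h B) = ε / 3 ∧
      dist A B ≤ rFun ε := by
  exact margulis_distance_general hε h.isometry hγ
    (abs_le.2 ⟨by linarith, by linarith⟩) htrans hA
end

section
/- Let ℍ be the hyperbolic plane on which SL(2,ℝ) acts by Möbius isometries, and let ε > 0 be a Margulis constant for ℍ, i.e. assume: for every discrete subgroup Δ of SL(2,ℝ) and every x ∈ ℍ, the subgroup of Δ generated by {γ ∈ Δ : dist(x, γ·x) ≤ ε} is virtually abelian. Set δ := arccosh(√2) = log(1+√2) and let L₁ > 0 be defined by sinh(L₁)·sinh(ε/100) = 1. Let λ > 0 and let g, h ∈ SL(2,ℝ) be hyperbolic elements (|trace| > 2) whose translation lengths τ(g) := ⨅_{x∈ℍ} dist(x, g·x) and τ(h) are equal to a common value τ ≥ λ, and suppose the subgroup of SL(2,ℝ) generated by g and h is discrete and not virtually abelian. Then for every natural number N ≥ max( (5 + 2δ + 3L₁)/λ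 , 27 + 9(5 + 2δ)/L₁ ), the images of g^N and h^N in PSL(2,ℝ) generate a free group of rank two. -/
open UpperHalfPlane

/-- `SL(2,ℝ)`. -/
abbrev SL2R := Matrix.SpecialLinearGroup (Fin 2) ℝ

/-- A group is virtually abelian if it has an abelian finite-index subgroup. -/
def VirtuallyAbelian (G : Type*) [Group G] : Prop :=
  ∃ H : Subgroup G, H.FiniteIndex ∧ ∀ a ∈ H, ∀ b ∈ H, a * b = b * a

/-- A subgroup of `SL(2,ℝ)` is discrete if the identity is isolated in it. -/
def IsDiscreteSubgroup (Γ : Subgroup SL2R) : Prop :=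
  ∃ U : Set (Matrix (Fin 2) (Fin 2) ℝ), IsOpen U ∧ (1 : Matrix (Fin 2) (Fin 2) ℝ) ∈ U ∧
    ∀ γ ∈ Γ, (γ : Matrix (Fin 2) (Fin 2) ℝ) ∈ U → γ = 1

/-- `ε` is a Margulis constant for `ℍ`: for every discrete subgroup `Δ ≤ SL(2,ℝ)` and
every `x ∈ ℍ`, the subgroup generated by the elements of `Δ` moving `x` at most `ε` is
virtually abelian. -/
def IsMargulisConstant (ε : ℝ) : Prop :=
  ∀ Δ : Subgroup SL2R, IsDiscreteSubgroup Δ → ∀ x : UpperHalfPlane,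
    VirtuallyAbelian ↥(Subgroup.closure {γ : SL2R | γ ∈ Δ ∧ dist x (γ • x) ≤ ε})

/-- The translation length of `g ∈ SL(2,ℝ)` acting on `ℍ`. -/
noncomputable def translationLength (g : SL2R) : ℝ :=
  ⨅ x : UpperHalfPlane, dist x (g • x)

/-!
Up to sign a hyperbolic element is `exp (x • X) = cosh x + sinh x • X` for a traceless involution
`X` and `x = τ / 2`. After replacing `h` by its inverse if necessary, the involutions of `g` and `h`
are simultaneously conjugate to the matrices with rows `(p, ±y)` and `(±z, -p)`, where `0 < p`,
`p ^ 2 + y * z = 1` and `|y| = |z|`; then `|y|` measures how far apart the two axes are.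

If `1 < sinh (N * x) * |y|`, the function `M ↦ trace (Mᵀ * M)` on `SL(2,ℝ)` is strictly convex along
any two of the letters `g ^ N`, `g ^ (-N)`, `h ^ N`, `h ^ (-N)`, and these four elements play
ping-pong. Otherwise `|y|` is so small that `u = g⁻¹ * h` lies close to the identity compared with
the size of `g`. The iterated commutators of `u` with `g` then tend to `1`, hence reach `1` by
discreteness; for trace reasons this makes `u` commute with `g`, which is excluded.
-/

section Development

open Matrix Filter Topology
open Real (cosh sinh)
open scoped commutatorElement

/-! ### Free pairs -/

lemma comp_freeGroupLift_pair {G H : Type*} [Group G] [Group H] (f : G →* H) (a b : G) :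
    f.comp (FreeGroup.lift ![a, b]) = FreeGroup.lift ![f a, f b] := by
  ext i
  fin_cases i <;> simp

/-- Two elements form a free pair if they freely generate the subgroup they generate. -/
def IsFreePair {G : Type*} [Group G] (a b : G) : Prop :=
  Function.Injective (FreeGroup.lift ![a, b])

namespace IsFreePair

variable {G H : Type*} [Group G] [Group H] {a b : G}

lemma of_map (f : G →* H) (h : IsFreePair (f a) (f b)) : IsFreePair a b := by
  rw [IsFreePair, ← comp_freeGroupLift_pair, MonoidHom.coe_comp] at h
  exact h.of_comp

lemma map_of_isMulTorsion_ker (h : IsFreePair a b) {f : G →* H} (hf : IsMulTorsion f.ker) :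
    IsFreePair (f a) (f b) := by
  rw [IsFreePair, ← comp_freeGroupLift_pair, injective_iff_map_eq_one]
  intro w hw
  have hfin : IsOfFinOrder (FreeGroup.lift ![a, b] w) :=
    Submonoid.isOfFinOrder_coe.2 (hf ⟨FreeGroup.lift ![a, b] w, hw⟩)
  rwa [h.isOfFinOrder_iff, isOfFinOrder_iff_eq_one] at hfin

lemma inv_right (h : IsFreePair a b) : IsFreePair a b⁻¹ := by
  let σ : FreeGroup (Fin 2) →* FreeGroup (Fin 2) :=
    FreeGroup.lift ![FreeGroup.of 0, (FreeGroup.of 1)⁻¹]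
  have hσ : σ.comp σ = MonoidHom.id _ := by
    ext i
    fin_cases i <;> simp [σ]
  have hlift : (FreeGroup.lift ![a, b]).comp σ = FreeGroup.lift ![a, b⁻¹] := by
    simp [σ, comp_freeGroupLift_pair]
  rw [IsFreePair, ← hlift, MonoidHom.coe_comp]
  exact h.comp (Function.LeftInverse.injective (DFunLike.congr_fun hσ))

end IsFreePair

lemma isMulTorsion_center_specialLinearGroup {n R : Type*} [Fintype n] [DecidableEq n]
    [CommRing R] [IsDomain R] :
    IsMulTorsion (Subgroup.center (Matrix.SpecialLinearGroup n R)) := by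
  have : NeZero (max (Fintype.card n) 1) := ⟨by positivity⟩
  have := Matrix.SpecialLinearGroup.center_equiv_rootsOfUnity (n := n) (R := R)
    |>.toEquiv.finite_iff.2 inferInstance
  exact isMulTorsion_of_finite

/-! ### Ping-pong with a convex potential -/

section PingPong

universe u

open scoped Pointwise

/-- The element of `G` spelled by a letter of the free group on `ι` under `i ↦ a i`: `a i` for
`(i, true)` and `(a i)⁻¹` for `(i, false)`. -/
def letter {ι G : Type*} [Group G] (a : ι → G) (l : ι × Bool) : G := cond l.2 (a l.1) (a l.1)⁻¹

-- Convexity makes `f` increase strictly under all letters but at most one, so the sets on which the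
-- various letters fail to increase `f` are disjoint; these are the ping-pong sets.
lemma injective_lift_of_convex_potential {ι G : Type u} [Nontrivial ι] [Group G] {α : Type*}
    [MulAction G α] [Nonempty α] (a : ι → G) (f : α → ℝ)
    (hf : Pairwise fun l m => ∀ x, 2 * f x < f (letter a l • x) + f (letter a m • x)) :
    Function.Injective (FreeGroup.lift a) := by
  let D (l : ι × Bool) : Set α := {x | f (letter a l • x) ≤ f x}
  let Y (i : ι) : Set α := {x | f (a i • x) < f x}
  have hD : Pairwise (Function.onFun Disjoint D) := fun l m hlm =>
    Set.disjoint_left.2 fun x (hl : f _ ≤ f x) (hm : f _ ≤ f x) => by linarith [hf hlm x]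
  have hYD (i) : Y i ⊆ D (i, true) := fun x (hx : f (a i • x) < f x) => hx.le
  have hD_nonempty (i) : (D (i, false)).Nonempty := by
    by_contra! hi
    have hdecr (x) : f (a i • x) < f x := by
      simpa [letter, D] using Set.eq_empty_iff_forall_notMem.1 hi (a i • x)
    obtain ⟨j, hj⟩ := exists_ne i
    have hincr (b) (x) : f x < f (letter a (j, b) • x) := by
      have hconvex : 2 * f x < f (a i • x) + f (letter a (j, b) • x) :=
        hf (i := (i, true)) (j := (j, b)) (by simp [hj.symm]) x
      linarith [hdecr x]
    obtain ⟨x⟩ := ‹Nonempty α›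
    have hback := hincr false (a j • x)
    simp only [letter, cond_false, inv_smul_smul] at hback
    exact lt_asymm hback (hincr true x)
  refine FreeGroup.injective_lift_of_ping_pong a (fun i => D (i, false)) Y hD_nonempty
    (fun i j hij => hD (by simpa using hij))
    (fun i j hij => (hD (by simpa using hij)).mono (hYD i) (hYD j))
    (fun i j => (hD (by simp)).mono_right (hYD j)) ?_ ?_
  · rintro i _ ⟨x, hx, rfl⟩
    simpa [letter, D, Y] using hx
  · rintro i _ ⟨x, hx, rfl⟩
    simpa [letter, D, Y] using hx

lemma injective_lift_of_posDef {ι n : Type u} [Nontrivial ι] [Fintype n] [DecidableEq n]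
    [Nonempty n] (a : ι → Matrix.SpecialLinearGroup n ℝ)
    (ha : Pairwise fun l m =>
      ((letter a l).1ᵀ * (letter a l).1 + (letter a m).1ᵀ * (letter a m).1 - (2 : ℝ) • 1).PosDef) :
    Function.Injective (FreeGroup.lift a) := by
  refine injective_lift_of_convex_potential a
    (fun M : Matrix.SpecialLinearGroup n ℝ => (M.1ᵀ * M.1).trace) fun l m hlm M => ?_
  have hM : Function.Injective M.1.mulVec :=
    mulVec_injective_of_isUnit ((isUnit_iff_isUnit_det _).2 (by simp))
  have hpos := ((ha hlm).conjTranspose_mul_mul_same hM).trace_pos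
  rw [conjTranspose_eq_transpose_of_trivial, mul_sub, sub_mul, mul_add, add_mul, trace_sub,
    trace_add, sub_pos] at hpos
  simpa [Matrix.SpecialLinearGroup.coe_mul, Matrix.mul_assoc, Matrix.mul_add, two_mul] using hpos

end PingPong

/-! ### Hyperbolic translations as exponentials of involutions -/

section AxialTranslation

variable {A : Type*}

section Algebra

variable [Ring A] [Algebra ℝ A]

/-- The one-parameter family `exp (x • X) = cosh x + sinh x • X` attached to an involution `X`. For
the traceless involutions of `Matrix (Fin 2) (Fin 2) ℝ` it consists of the hyperbolic translations
along an axis of `ℍ`, by the signed length `2 * x`. -/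
noncomputable def axialTranslation (X : A) (x : ℝ) : A := cosh x • 1 + sinh x • X

@[simp]
lemma axialTranslation_zero (X : A) : axialTranslation X 0 = 1 := by
  simp [axialTranslation]

lemma axialTranslation_add {X : A} (hX : X * X = 1) (x y : ℝ) :
    axialTranslation X (x + y) = axialTranslation X x * axialTranslation X y := by
  simp only [axialTranslation, Real.cosh_add, Real.sinh_add, mul_add, add_mul, smul_mul_smul_comm,
    mul_one, one_mul, hX]
  module

lemma axialTranslation_natCast_mul {X : A} (hX : X * X = 1) (n : ℕ) (x : ℝ) :
    axialTranslation X (n * x) = axialTranslation X x ^ n := by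
  induction n with
  | zero => simp
  | succ n ih => rw [Nat.cast_succ, add_one_mul, axialTranslation_add hX, ih, pow_succ]

lemma semiconjBy_axialTranslation {M X Y : A} (h : SemiconjBy M X Y) (x : ℝ) :
    SemiconjBy M (axialTranslation X x) (axialTranslation Y x) :=
  ((SemiconjBy.one_right M).smul_right _).add_right (h.smul_right _)

end Algebra

section Norm

variable [SeminormedRing A] [NormedAlgebra ℝ A] [NormOneClass A]

lemma norm_axialTranslation_le (X : A) (x : ℝ) :
    ‖axialTranslation X x‖ ≤ cosh x + |sinh x| * ‖X‖ := by
  refine (norm_add_le _ _).trans_eq ?_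
  rw [norm_smul, norm_smul, norm_one, mul_one, Real.norm_eq_abs, Real.norm_eq_abs,
    abs_of_pos (Real.cosh_pos x)]

lemma norm_axialTranslation_sub_one_le (X : A) (x : ℝ) :
    ‖axialTranslation X x - 1‖ ≤ cosh x + |sinh x| * ‖X‖ := by
  have hsub : axialTranslation X x - 1 = (cosh x - 1) • 1 + sinh x • X := by
    rw [axialTranslation]
    module
  have hcosh := Real.one_le_cosh x
  rw [hsub]
  refine (norm_add_le _ _).trans ?_
  rw [norm_smul, norm_smul, norm_one, mul_one, Real.norm_eq_abs, Real.norm_eq_abs,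
    abs_of_nonneg (sub_nonneg.2 hcosh)]
  linarith

end Norm

end AxialTranslation

lemma coe_inv_eq_axialTranslation {n : Type*} [Fintype n] [DecidableEq n]
    {g : SpecialLinearGroup n ℝ} {X : Matrix n n ℝ} {x : ℝ} (hX : X * X = 1)
    (hg : g.1 = axialTranslation X x) : (g⁻¹).1 = axialTranslation X (-x) := by
  refine left_inv_eq_right_inv (congrArg Subtype.val (inv_mul_cancel g)) ?_
  rw [hg, ← axialTranslation_add hX, add_neg_cancel, axialTranslation_zero]

/-- The traceless matrix with rows `(p, y)` and `(z, -p)`. When `p ^ 2 + y * z = 1` it is an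
involution and encodes an oriented geodesic of `ℍ`, whose endpoints are its eigenlines. -/
def axisMatrix (p y z : ℝ) : Matrix (Fin 2) (Fin 2) ℝ := !![p, y; z, -p]

lemma axisMatrix_mul_self {p y z : ℝ} (h : p ^ 2 + y * z = 1) :
    axisMatrix p y z * axisMatrix p y z = 1 := by
  rw [axisMatrix, mul_fin_two, one_fin_two]
  congr! <;> linarith

lemma axisMatrix_neg (a b c : ℝ) : axisMatrix (-a) (-b) (-c) = -axisMatrix a b c := by
  simp [axisMatrix]

lemma axisMatrix_sub (p y z p' y' z' : ℝ) :
    axisMatrix p y z - axisMatrix p' y' z' = axisMatrix (p - p') (y - y') (z - z') := by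
  ext i j
  fin_cases i <;> fin_cases j <;> simp [axisMatrix, sub_eq_add_neg, add_comm]

lemma det_axisMatrix (p y z : ℝ) : (axisMatrix p y z).det = -(p ^ 2 + y * z) := by
  rw [axisMatrix, det_fin_two_of]
  ring

lemma smul_axisMatrix (r p y z : ℝ) :
    r • axisMatrix p y z = axisMatrix (r * p) (r * y) (r * z) := by
  ext i j
  fin_cases i <;> fin_cases j <;> simp [axisMatrix]

lemma axialTranslation_axisMatrix (p y z x : ℝ) : axialTranslation (axisMatrix p y z) x =
    !![cosh x + sinh x * p, sinh x * y; sinh x * z, cosh x - sinh x * p] := by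
  ext i j
  fin_cases i <;> fin_cases j <;> simp [axialTranslation, axisMatrix, sub_eq_add_neg]

lemma trace_axialTranslation_axisMatrix (p y z x : ℝ) :
    (axialTranslation (axisMatrix p y z) x).trace = 2 * cosh x := by
  rw [axialTranslation_axisMatrix, trace_fin_two_of]
  ring

lemma trace_mul_eq_of_axialTranslation {g h : SL2R} {a b c a' b' c' x : ℝ}
    (hg : g.1 = axialTranslation (axisMatrix a b c) x)
    (hh : h.1 = axialTranslation (axisMatrix a' b' c') x) :
    (g * h).1.trace = 2 * cosh x ^ 2 + sinh x ^ 2 * (2 * a * a' + b * c' + c * b') := by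
  rw [Matrix.SpecialLinearGroup.coe_mul, hg, hh, axialTranslation_axisMatrix,
    axialTranslation_axisMatrix, mul_fin_two, trace_fin_two_of]
  ring

lemma exists_coe_eq_smul_one_add_axisMatrix (g : SL2R) :
    ∃ a b c, a ^ 2 + b * c = (g.1.trace / 2) ^ 2 - 1 ∧
      g.1 = (g.1.trace / 2) • 1 + axisMatrix a b c := by
  have hdet := g.det_coe
  rw [det_fin_two] at hdet
  rw [trace_fin_two]
  refine ⟨(g 0 0 - g 1 1) / 2, g 0 1, g 1 0, by linear_combination -hdet, ?_⟩
  ext i j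
  fin_cases i <;> fin_cases j <;> simp [axisMatrix] <;> ring

lemma exists_eq_axialTranslation {g : SL2R} {x : ℝ} (hx : x ≠ 0) (hg : g.1.trace = 2 * cosh x) :
    ∃ p y z, p ^ 2 + y * z = 1 ∧ g.1 = axialTranslation (axisMatrix p y z) x := by
  have hs : sinh x ≠ 0 := Real.sinh_eq_zero.not.2 hx
  obtain ⟨a, b, c, habc, hgabc⟩ := exists_coe_eq_smul_one_add_axisMatrix g
  rw [hg, mul_div_cancel_left₀ _ two_ne_zero] at habc hgabc
  refine ⟨a / sinh x, b / sinh x, c / sinh x, ?_, ?_⟩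
  · field_simp
    linarith [Real.cosh_sq x]
  · rw [hgabc, axialTranslation, add_right_inj, smul_axisMatrix]
    field_simp

/-! ### Translations along distant axes -/

lemma posDef_of_abs_add_abs_lt {a b d : ℝ} (h : |b| + |d| < a) :
    (!![a + b, d; d, a - b]).PosDef := by
  refine .of_dotProduct_mulVec_pos (by ext i j; fin_cases i <;> fin_cases j <;> rfl) fun v hv => ?_
  have hquad : star v ⬝ᵥ !![a + b, d; d, a - b] *ᵥ v =
      a * (v 0 ^ 2 + v 1 ^ 2) + b * (v 0 ^ 2 - v 1 ^ 2) + d * (2 * v 0 * v 1) := by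
    simp [dotProduct, Fin.sum_univ_two]
    ring
  have hv' : 0 < v 0 ^ 2 + v 1 ^ 2 := by
    by_contra! h0
    exact hv (by ext i; fin_cases i <;> simp <;> nlinarith)
  have hb : |v 0 ^ 2 - v 1 ^ 2| ≤ v 0 ^ 2 + v 1 ^ 2 := abs_le.2 ⟨by nlinarith, by nlinarith⟩
  have hd : |2 * v 0 * v 1| ≤ v 0 ^ 2 + v 1 ^ 2 :=
    abs_le.2 ⟨by nlinarith [sq_nonneg (v 0 + v 1)], by nlinarith [sq_nonneg (v 0 - v 1)]⟩
  have hb' := neg_le_of_abs_le <|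
    (abs_mul b _).trans_le (mul_le_mul_of_nonneg_left hb (abs_nonneg b))
  have hd' := neg_le_of_abs_le <|
    (abs_mul d _).trans_le (mul_le_mul_of_nonneg_left hd (abs_nonneg d))
  rw [hquad]
  linarith [mul_lt_mul_of_pos_right h hv']

lemma posDef_axialTranslation_self_neg {n : Type*} [Fintype n] [DecidableEq n] (X : Matrix n n ℝ)
    {x : ℝ} (hx : x ≠ 0) : ((axialTranslation X x)ᵀ * axialTranslation X x +
      (axialTranslation X (-x))ᵀ * axialTranslation X (-x) - (2 : ℝ) • 1).PosDef := by
  have hs : 0 < 2 * sinh x ^ 2 := by positivity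
  have key : (axialTranslation X x)ᵀ * axialTranslation X x +
      (axialTranslation X (-x))ᵀ * axialTranslation X (-x) - (2 : ℝ) • 1 =
      (2 * sinh x ^ 2) • (1 + Xᵀ * X) := by
    simp only [axialTranslation, transpose_add, transpose_smul, transpose_one, Real.cosh_neg,
      Real.sinh_neg, mul_add, add_mul, smul_mul_smul_comm, mul_one, one_mul]
    match_scalars
    · linear_combination 2 * Real.cosh_sq x
    all_goals ring
  rw [key]
  exact (PosDef.one.add_posSemidef (posSemidef_conjTranspose_mul_self X)).smul hs

lemma gram_add_gram_axialTranslation_reflected {p y z u v : ℝ} (hyz : y ^ 2 = z ^ 2)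
    (huv : v = u ∨ v = -u) :
    (axialTranslation (axisMatrix p y z) u)ᵀ * axialTranslation (axisMatrix p y z) u +
      (axialTranslation (axisMatrix p (-y) (-z)) v)ᵀ *
        axialTranslation (axisMatrix p (-y) (-z)) v - (2 : ℝ) • 1 =
    let A := 2 * sinh u ^ 2 * (1 + p ^ 2 + y ^ 2)
    let B := 2 * cosh u * p * (sinh u + sinh v)
    let D := cosh u * (y + z) * (sinh u - sinh v)
    !![A + B, D; D, A - B] := by
  have hcv : cosh v = cosh u := by rcases huv with rfl | rfl <;> simp
  have hsv : sinh v ^ 2 = sinh u ^ 2 := by rcases huv with rfl | rfl <;> simp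
  have hcosh := Real.cosh_sq u
  ext i j
  fin_cases i <;> fin_cases j <;>
    simp [axialTranslation_axisMatrix, mul_apply, Fin.sum_univ_two, hcv]
  · linear_combination 2 * hcosh - 2 * sinh u ^ 2 * hyz + (p ^ 2 + z ^ 2) * hsv
  · linear_combination p * (z - y) * hsv
  · linear_combination p * (z - y) * hsv
  · linear_combination 2 * hcosh + (p ^ 2 + y ^ 2) * hsv

lemma posDef_axialTranslation_reflected {p y z u v : ℝ} (hyz : y ^ 2 = z ^ 2)
    (huv : v = u ∨ v = -u) (hu : u ≠ 0)
    (hp : 2 * (cosh u * |p|) < |sinh u| * (1 + p ^ 2 + y ^ 2))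
    (hy : cosh u * |y + z| < |sinh u| * (1 + p ^ 2 + y ^ 2)) :
    ((axialTranslation (axisMatrix p y z) u)ᵀ * axialTranslation (axisMatrix p y z) u +
      (axialTranslation (axisMatrix p (-y) (-z)) v)ᵀ *
        axialTranslation (axisMatrix p (-y) (-z)) v - (2 : ℝ) • 1).PosDef := by
  rw [gram_add_gram_axialTranslation_reflected hyz huv]
  refine posDef_of_abs_add_abs_lt ?_
  have hs : 0 < 2 * |sinh u| := by simpa using hu
  have hc : |cosh u| = cosh u := abs_of_pos (Real.cosh_pos u)
  rcases huv with rfl | rfl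
  · calc _ = 2 * |sinh v| * (2 * (cosh v * |p|)) := by
          simp only [sub_self, mul_zero, abs_zero, add_zero, abs_mul, hc, ← two_mul, abs_two]
          ring
      _ < 2 * |sinh v| * (|sinh v| * (1 + p ^ 2 + y ^ 2)) := mul_lt_mul_of_pos_left hp hs
      _ = _ := by rw [← sq_abs (sinh v)]; ring
  · calc _ = 2 * |sinh u| * (cosh u * |y + z|) := by
          simp only [Real.sinh_neg, add_neg_cancel, mul_zero, abs_zero, zero_add, sub_neg_eq_add,
            abs_mul, hc, ← two_mul, abs_two]
          ring
      _ < 2 * |sinh u| * (|sinh u| * (1 + p ^ 2 + y ^ 2)) := mul_lt_mul_of_pos_left hy hs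
      _ = _ := by rw [← sq_abs (sinh u)]; ring

lemma isFreePair_of_axialTranslation {g h : SL2R} {p y z x : ℝ} (hpyz : p ^ 2 + y * z = 1)
    (hg : g.1 = axialTranslation (axisMatrix p y z) x)
    (hh : h.1 = axialTranslation (axisMatrix p (-y) (-z)) x) (hyz : y ^ 2 = z ^ 2) (hx : x ≠ 0)
    (hp : 2 * (cosh x * |p|) < |sinh x| * (1 + p ^ 2 + y ^ 2))
    (hy : cosh x * |y + z| < |sinh x| * (1 + p ^ 2 + y ^ 2)) : IsFreePair g h := by
  let X : Fin 2 → Matrix (Fin 2) (Fin 2) ℝ := ![axisMatrix p y z, axisMatrix p (-y) (-z)]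
  let u (b : Bool) : ℝ := cond b x (-x)
  have hX (i) : X i * X i = 1 := by fin_cases i <;> exact axisMatrix_mul_self (by linarith)
  have hgh (i) : (![g, h] i).1 = axialTranslation (X i) x := by fin_cases i <;> assumption
  have hletter : ∀ i b, (letter ![g, h] (i, b)).1 = axialTranslation (X i) (u b)
    | i, true => hgh i
    | i, false => coe_inv_eq_axialTranslation (hX i) (hgh i)
  have hu (b) : u b ≠ 0 := by cases b <;> simpa [u]
  have hself (i b) := posDef_axialTranslation_self_neg (X i) (hu b)
  have hreflected (b d) := posDef_axialTranslation_reflected (p := p) (u := u b) (v := u d) hyz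
    (by cases b <;> cases d <;> simp [u]) (hu b) (by cases b <;> simpa [u])
    (by cases b <;> simpa [u])
  refine injective_lift_of_posDef _ ?_
  rintro ⟨i, b⟩ ⟨j, d⟩ hne
  simp only [hletter]
  rcases eq_or_ne i j with rfl | hij
  · obtain rfl : d = !b := by grind
    have hnot : u (!b) = -u b := by cases b <;> simp [u]
    exact hnot ▸ hself i b
  · fin_cases i <;> fin_cases j <;> try contradiction
    · exact hreflected b d
    · rw [add_comm]
      exact hreflected d b

lemma isFreePair_of_one_lt_sinh_mul_abs {g h : SL2R} {p y z x : ℝ} (hpyz : p ^ 2 + y * z = 1)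
    (hp : 0 < p) (hp2 : 1 ≤ 2 * p ^ 2) (hyz : |y| = |z|)
    (hg : g.1 = axialTranslation (axisMatrix p y z) x)
    (hh : h.1 = axialTranslation (axisMatrix p (-y) (-z)) x)
    (hx : 0 < x) (hxy : 1 < sinh x * |y|) : IsFreePair g h := by
  have hs : 0 < sinh x := Real.sinh_pos_iff.2 hx
  have hcosh := Real.cosh_sq x
  have hxy2 : 1 < sinh x ^ 2 * y ^ 2 := by rw [← sq_abs y]; nlinarith
  suffices 2 * (cosh x * p) < sinh x * (1 + p ^ 2 + y ^ 2) ∧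
      cosh x * |y + z| < sinh x * (1 + p ^ 2 + y ^ 2) from
    isFreePair_of_axialTranslation hpyz hg hh ((sq_eq_sq_iff_abs_eq_abs _ _).2 hyz) hx.ne'
      (by rw [abs_of_pos hp, abs_of_pos hs]; exact this.1) (by rw [abs_of_pos hs]; exact this.2)
  rcases abs_eq_abs.1 hyz with rfl | rfl
  · have hcp : cosh x * p < sinh x := by
      refine lt_of_pow_lt_pow_left₀ 2 hs.le ?_
      rw [mul_pow]
      nlinarith
    have hcy : cosh x * |y| < sinh x := by
      refine lt_of_pow_lt_pow_left₀ 2 hs.le ?_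
      rw [mul_pow, sq_abs]
      nlinarith
    rw [← two_mul, abs_mul, abs_two]
    constructor <;> nlinarith
  · have hcp : cosh x < sinh x * p := by
      refine lt_of_pow_lt_pow_left₀ 2 (by positivity) ?_
      rw [mul_pow]
      nlinarith
    rw [neg_add_cancel, abs_zero, mul_zero]
    constructor <;> nlinarith

/-! ### Conjugating two axes into symmetric position -/

lemma semiconjBy_axisMatrix_iff {a b c d p y z p' y' z' : ℝ} :
    SemiconjBy !![a, b; c, d] (axisMatrix p y z) (axisMatrix p' y' z') ↔
      (a * p + b * z = p' * a + y' * c ∧ a * y - b * p = p' * b + y' * d) ∧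
        c * p + d * z = z' * a - p' * c ∧ c * y - d * p = z' * b - p' * d := by
  simp [SemiconjBy, axisMatrix, sub_eq_add_neg]

lemma exists_semiconjBy_axisMatrix_diagonal {a b c m : ℝ} (hm : m ≠ 0)
    (h : a ^ 2 + b * c = m ^ 2) :
    ∃ M : SL2R, SemiconjBy M.1 (axisMatrix a b c) (axisMatrix m 0 0) := by
  rcases eq_or_ne (a + m) 0 with ham | ham
  · obtain rfl : a = -m := by linarith
    refine ⟨⟨!![c / (4 * m ^ 2), 1 / (2 * m); -2 * m, b], ?_⟩, semiconjBy_axisMatrix_iff.2 ?_⟩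
    · rw [det_fin_two_of]
      field_simp
      linear_combination h
    · refine ⟨⟨?_, ?_⟩, ?_, ?_⟩ <;> field_simp <;> grind
  · refine ⟨⟨!![-1 / (2 * m), -b / (2 * m * (a + m)); c, -(a + m)], ?_⟩,
      semiconjBy_axisMatrix_iff.2 ?_⟩
    · rw [det_fin_two_of]
      field_simp
      linear_combination h
    · refine ⟨⟨?_, ?_⟩, ?_, ?_⟩ <;> field_simp <;> grind

lemma det_eq_of_semiconjBy {n : Type*} [Fintype n] [DecidableEq n] {R : Type*} [CommRing R]
    {M : SpecialLinearGroup n R} {X Y : Matrix n n R} (h : SemiconjBy M.1 X Y) :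
    X.det = Y.det := by
  simpa using congrArg det h.eq

lemma exists_semiconjBy_axisMatrix (M : SL2R) (a b c : ℝ) :
    ∃ p y z, SemiconjBy M.1 (axisMatrix a b c) (axisMatrix p y z) := by
  have hM : (M⁻¹).1 * M.1 = 1 := congrArg Subtype.val (inv_mul_cancel M)
  set Y := M.1 * axisMatrix a b c * (M⁻¹).1 with hY
  have hYtrace : Y 0 0 + Y 1 1 = 0 := by
    rw [← trace_fin_two, hY, trace_mul_cycle, hM, Matrix.one_mul, axisMatrix, trace_fin_two_of,
      add_neg_cancel]
  have hYaxis : axisMatrix (Y 0 0) (Y 0 1) (Y 1 0) = Y := by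
    conv_rhs => rw [eta_fin_two Y, ← neg_eq_of_add_eq_zero_right hYtrace]
    rfl
  refine ⟨Y 0 0, Y 0 1, Y 1 0, ?_⟩
  rw [hYaxis, SemiconjBy, hY, Matrix.mul_assoc _ _ M.1, hM, Matrix.mul_one]

lemma exists_semiconjBy_axisMatrix_scale {r : ℝ} (hr : 0 < r) :
    ∃ M : SL2R, ∀ p y z, SemiconjBy M.1 (axisMatrix p y z) (axisMatrix p (r * y) (r⁻¹ * z)) := by
  have hsqrt : √r ≠ 0 := (Real.sqrt_pos.2 hr).ne'
  have hsq := Real.sq_sqrt hr.le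
  refine ⟨⟨!![√r, 0; 0, (√r)⁻¹], by rw [det_fin_two_of]; simp [hsqrt]⟩, fun p y z => ?_⟩
  refine semiconjBy_axisMatrix_iff.2 ⟨⟨?_, ?_⟩, ?_, ?_⟩ <;> field_simp <;> grind

lemma exists_semiconjBy_axisMatrix_abs_eq {y z : ℝ} (hy : y ≠ 0) (hz : z ≠ 0) (p : ℝ) :
    ∃ (M : SL2R) (y' z' : ℝ), y' * z' = y * z ∧ |y'| = |z'| ∧
      SemiconjBy M.1 (axisMatrix p y z) (axisMatrix p y' z') ∧
      SemiconjBy M.1 (axisMatrix p (-y) (-z)) (axisMatrix p (-y') (-z')) := by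
  have hr : 0 < √(|z| / |y|) := Real.sqrt_pos.2 (by positivity)
  have hr2 : √(|z| / |y|) ^ 2 = |z| / |y| := Real.sq_sqrt (by positivity)
  obtain ⟨M, hM⟩ := exists_semiconjBy_axisMatrix_scale hr
  generalize √(|z| / |y|) = r at *
  refine ⟨M, r * y, r⁻¹ * z, by field_simp, ?_, hM p y z, by simpa using hM p (-y) (-z)⟩
  rw [abs_mul, abs_mul, abs_inv, abs_of_pos hr]
  field_simp at hr2 ⊢
  exact hr2

lemma coe_conj_eq_axialTranslation {M g : SL2R} {X Y : Matrix (Fin 2) (Fin 2) ℝ} {x : ℝ}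
    (h : SemiconjBy M.1 X Y) (hg : g.1 = axialTranslation X x) :
    (M * g * M⁻¹).1 = axialTranslation Y x := by
  have hM : M.1 * (M⁻¹).1 = 1 := congrArg Subtype.val (mul_inv_cancel M)
  calc (M * g * M⁻¹).1 = M.1 * axialTranslation X x * (M⁻¹).1 := hg ▸ rfl
    _ = axialTranslation Y x := by
      rw [(semiconjBy_axialTranslation h x).eq, Matrix.mul_assoc, hM, Matrix.mul_one]

lemma exists_semiconjBy_axisMatrix_neg {a b c a' b' c' : ℝ} (h : a ^ 2 + b * c = 1)
    (h' : a' ^ 2 + b' * c' = 1) (hnonneg : 0 ≤ 2 * a * a' + b * c' + c * b') :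
    ∃ (M : SL2R) (p y z : ℝ), 0 < p ∧ 1 ≤ 2 * p ^ 2 ∧ p ^ 2 + y * z = 1 ∧
      SemiconjBy M.1 (axisMatrix a b c) (axisMatrix p y z) ∧
      SemiconjBy M.1 (axisMatrix a' b' c') (axisMatrix p (-y) (-z)) := by
  have hpos : 0 < 2 + (2 * a * a' + b * c' + c * b') := by linarith
  set m := √(2 + (2 * a * a' + b * c' + c * b'))
  have hm : 0 < m := Real.sqrt_pos.2 hpos
  have hm2 : m ^ 2 = 2 + (2 * a * a' + b * c' + c * b') := Real.sq_sqrt hpos.le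
  -- Diagonalising the sum of the two involutions makes their off-diagonal parts opposite.
  obtain ⟨M, hM⟩ := exists_semiconjBy_axisMatrix_diagonal (a := a + a') (b := b + b')
    (c := c + c') hm.ne' (by linarith)
  obtain ⟨p, y, z, hX⟩ := exists_semiconjBy_axisMatrix M a b c
  have hX' : SemiconjBy M.1 (axisMatrix a' b' c') (axisMatrix (m - p) (-y) (-z)) := by
    have hsub := hM.sub_right hX
    simp only [axisMatrix_sub] at hsub
    simpa using hsub
  have hpyz : p ^ 2 + y * z = 1 := by
    have := det_eq_of_semiconjBy hX
    rw [det_axisMatrix, det_axisMatrix] at this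
    linarith
  have hpyz' : (m - p) ^ 2 + y * z = 1 := by
    have := det_eq_of_semiconjBy hX'
    rw [det_axisMatrix, det_axisMatrix] at this
    linarith
  have hp : m = 2 * p := mul_left_cancel₀ hm.ne' (by linarith)
  rw [show m - p = p by linarith] at hX'
  exact ⟨M, p, y, z, by linarith, by nlinarith, hpyz, hX, hX'⟩

/-! ### Discrete subgroups -/

lemma coe_add_coe_inv (k : SL2R) : k.1 + (k⁻¹).1 = k.1.trace • 1 := by
  rw [Matrix.SpecialLinearGroup.coe_inv, adjugate_fin_two, trace_fin_two]
  ext i j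
  fin_cases i <;> fin_cases j <;> simp [add_comm]

namespace IsDiscreteSubgroup

variable {Γ : Subgroup SL2R}

lemma exists_eq_one (hΓ : IsDiscreteSubgroup Γ) {u : ℕ → SL2R} (hu : ∀ n, u n ∈ Γ)
    (hlim : Tendsto (fun n => (u n).1) atTop (𝓝 1)) : ∃ n, u n = 1 := by
  obtain ⟨U, hU, h1, hUΓ⟩ := hΓ
  obtain ⟨n, hn⟩ := (hlim.eventually (hU.mem_nhds h1)).exists
  exact ⟨n, hUΓ _ (hu n) hn⟩

lemma map_conj (hΓ : IsDiscreteSubgroup Γ) (M : SL2R) :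
    IsDiscreteSubgroup (Γ.map (MulAut.conj M).toMonoidHom) := by
  obtain ⟨U, hU, h1, hUΓ⟩ := hΓ
  have hM : (M⁻¹).1 * M.1 = 1 := congrArg Subtype.val (inv_mul_cancel M)
  refine ⟨(fun X => (M⁻¹).1 * X * M.1) ⁻¹' U, hU.preimage (by fun_prop),
    by simpa only [Set.mem_preimage, Matrix.mul_one, hM], ?_⟩
  rintro _ ⟨γ, hγ, rfl⟩ hmem
  have hval : (M⁻¹).1 * (M * γ * M⁻¹).1 * M.1 = γ.1 :=
    congrArg Subtype.val (show M⁻¹ * (M * γ * M⁻¹) * M = γ by group)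
  obtain rfl := hUΓ γ hγ (hval ▸ hmem)
  exact map_one _

end IsDiscreteSubgroup

lemma sq_eq_one_of_mem_center {ζ : SL2R} (hζ : ζ ∈ Subgroup.center SL2R) : ζ ^ 2 = 1 := by
  obtain ⟨r, hr, hrζ⟩ := Matrix.SpecialLinearGroup.mem_center_iff.1 hζ
  refine Subtype.ext ?_
  rw [Matrix.SpecialLinearGroup.coe_pow, ← hrζ, ← map_pow]
  simpa using congrArg (scalar (Fin 2)) hr

lemma eq_one_of_sq_eq_one_of_trace_pos {X : SL2R} (hX : X ^ 2 = 1) (htr : 0 < X.1.trace) :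
    X = 1 := by
  have hinv : X⁻¹ = X := inv_eq_of_mul_eq_one_right (by rw [← sq, hX])
  have hscalar : X.1 = (X.1.trace / 2) • 1 := by
    have := coe_add_coe_inv X
    rw [hinv, ← two_smul ℝ] at this
    rw [div_eq_inv_mul, mul_smul, ← this, inv_smul_smul₀ (two_ne_zero' ℝ)]
  have hdet : (X.1.trace / 2) ^ 2 = 1 := by
    have := X.det_coe
    rw [hscalar] at this
    simpa using this
  refine Subtype.ext ?_
  rw [hscalar, show X.1.trace / 2 = 1 by nlinarith, one_smul]
  rfl

lemma IsDiscreteSubgroup.sup_center {Γ : Subgroup SL2R} (hΓ : IsDiscreteSubgroup Γ) :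
    IsDiscreteSubgroup (Γ ⊔ Subgroup.center SL2R) := by
  obtain ⟨U, hU, h1, hUΓ⟩ := hΓ
  refine ⟨{X | X ^ 2 ∈ U ∧ 0 < X.trace}, ?_, by simpa, ?_⟩
  · exact (hU.preimage (by fun_prop)).inter (isOpen_lt continuous_const continuous_id.matrix_trace)
  rintro X hX ⟨hXU, htr⟩
  obtain ⟨γ, hγ, ζ, hζ, rfl⟩ := Subgroup.mem_sup_of_normal_right.1 hX
  have hsq : (γ * ζ) ^ 2 = γ ^ 2 := by
    rw [Commute.mul_pow (Subgroup.mem_center_iff.1 hζ γ), sq_eq_one_of_mem_center hζ, mul_one]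
  have hγ1 := hUΓ (γ ^ 2) (Γ.pow_mem hγ 2) (by rw [← hsq]; exact hXU)
  exact eq_one_of_sq_eq_one_of_trace_pos (hsq.trans hγ1) htr

section Triangular

lemma coe_conj_of_upperTriangular {g k : SL2R} {t : ℝ} (hg : g 1 0 = 0)
    (hk : k.1 = !![1, t; 0, 1]) : (g * k * g⁻¹).1 = !![1, g 0 0 ^ 2 * t; 0, 1] := by
  have hdet := g.det_coe
  rw [det_fin_two, hg, mul_zero, sub_zero] at hdet
  rw [Matrix.SpecialLinearGroup.coe_mul, Matrix.SpecialLinearGroup.coe_mul, hk,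
    Matrix.SpecialLinearGroup.coe_inv, adjugate_fin_two]
  ext i j
  fin_cases i <;> fin_cases j <;> simp [mul_apply, Fin.sum_univ_two, hg] <;> grind

lemma IsDiscreteSubgroup.eq_one_of_upperTriangular {Γ : Subgroup SL2R} (hΓ : IsDiscreteSubgroup Γ)
    {g k : SL2R} {t : ℝ} (hgΓ : g ∈ Γ) (hkΓ : k ∈ Γ) (hg : g 1 0 = 0) (hg1 : g 0 0 ^ 2 < 1)
    (hk : k.1 = !![1, t; 0, 1]) : k = 1 := by
  have hconj (n : ℕ) : (g ^ n * k * (g ^ n)⁻¹).1 = !![1, (g 0 0 ^ 2) ^ n * t; 0, 1] := by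
    induction n with
    | zero => simpa using hk
    | succ n ih =>
      have hstep : g ^ (n + 1) * k * (g ^ (n + 1))⁻¹ = g * (g ^ n * k * (g ^ n)⁻¹) * g⁻¹ := by
        rw [pow_succ']
        group
      rw [hstep, coe_conj_of_upperTriangular hg ih, ← mul_assoc, ← pow_succ']
  have hlim : Tendsto (fun n : ℕ => (g 0 0 ^ 2) ^ n * t) atTop (𝓝 0) := by
    simpa using (tendsto_pow_atTop_nhds_zero_of_lt_one (sq_nonneg _) hg1).mul_const t
  obtain ⟨n, hn⟩ := hΓ.exists_eq_one
    (fun n => Γ.mul_mem (Γ.mul_mem (Γ.pow_mem hgΓ n) hkΓ) (Γ.inv_mem (Γ.pow_mem hgΓ n))) <| by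
    simp only [hconj]
    have hcont : Continuous fun s : ℝ => !![1, s; 0, 1] := by fun_prop
    simpa [one_fin_two, Function.comp_def] using (hcont.tendsto 0).comp hlim
  exact conj_eq_one_iff.1 hn

lemma coe_commutator_of_upperTriangular {g h : SL2R} (hg : g 1 0 = 0) (hh : h 1 0 = 0) :
    ∃ t, (⁅g, h⁆).1 = !![1, t; 0, 1] := by
  have hdg := g.det_coe
  have hdh := h.det_coe
  rw [det_fin_two, hg, mul_zero, sub_zero] at hdg
  rw [det_fin_two, hh, mul_zero, sub_zero] at hdh
  have hval : (⁅g, h⁆).1 = g.1 * h.1 * (g⁻¹).1 * (h⁻¹).1 := rfl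
  refine ⟨(⁅g, h⁆) 0 1, ?_⟩
  rw [hval, Matrix.SpecialLinearGroup.coe_inv, Matrix.SpecialLinearGroup.coe_inv, adjugate_fin_two,
    adjugate_fin_two]
  ext i j
  fin_cases i <;> fin_cases j <;> simp [mul_apply, Fin.sum_univ_two, hg, hh] <;> grind

lemma IsDiscreteSubgroup.commute_of_upperTriangular {Γ : Subgroup SL2R}
    (hΓ : IsDiscreteSubgroup Γ) {g h : SL2R} (hgΓ : g ∈ Γ) (hhΓ : h ∈ Γ) (hg : g 1 0 = 0)
    (hh : h 1 0 = 0) (htr : g.1.trace ^ 2 ≠ 4) : Commute g h := by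
  have hdet := g.det_coe
  rw [det_fin_two, hg, mul_zero, sub_zero] at hdet
  have hsq : g 0 0 ^ 2 * g 1 1 ^ 2 = 1 := by rw [← mul_pow, hdet, one_pow]
  have hg1 : g 0 0 ^ 2 ≠ 1 := by
    contrapose! htr
    rw [htr, one_mul] at hsq
    rw [trace_fin_two]
    linear_combination htr + 2 * hdet + hsq
  rw [← commutatorElement_eq_one_iff_commute]
  have hk : ⁅g, h⁆ ∈ Γ :=
    Γ.mul_mem (Γ.mul_mem (Γ.mul_mem hgΓ hhΓ) (Γ.inv_mem hgΓ)) (Γ.inv_mem hhΓ)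
  obtain ⟨t, ht⟩ := coe_commutator_of_upperTriangular hg hh
  rcases hg1.lt_or_gt with hlt | hgt
  · exact hΓ.eq_one_of_upperTriangular hgΓ hk hg hlt ht
  · have hinv : (g⁻¹).1 = !![g 1 1, -g 0 1; -g 1 0, g 0 0] := by
      rw [Matrix.SpecialLinearGroup.coe_inv, adjugate_fin_two]
    refine hΓ.eq_one_of_upperTriangular (Γ.inv_mem hgΓ) hk (by simp [hinv, hg]) ?_ ht
    simp only [hinv, of_apply, cons_val', cons_val_zero, cons_val_fin_one]
    nlinarith

lemma IsDiscreteSubgroup.commute_of_lowerTriangular {Γ : Subgroup SL2R}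
    (hΓ : IsDiscreteSubgroup Γ) {g h : SL2R} (hgΓ : g ∈ Γ) (hhΓ : h ∈ Γ) (hg : g 0 1 = 0)
    (hh : h 0 1 = 0) (htr : g.1.trace ^ 2 ≠ 4) : Commute g h := by
  let J : SL2R := ⟨!![0, -1; 1, 0], by simp⟩
  have hJ (k : SL2R) : (J * k * J⁻¹).1 = !![k 1 1, -k 1 0; -k 0 1, k 0 0] := by
    rw [Matrix.SpecialLinearGroup.coe_mul, Matrix.SpecialLinearGroup.coe_mul,
      Matrix.SpecialLinearGroup.coe_inv, adjugate_fin_two]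
    conv_lhs => rw [eta_fin_two k.1]
    simp [J]
  have hcomm : Commute (J * g * J⁻¹) (J * h * J⁻¹) := by
    refine (hΓ.map_conj J).commute_of_upperTriangular (Subgroup.mem_map_of_mem _ hgΓ)
      (Subgroup.mem_map_of_mem _ hhΓ) (by simp [hJ, hg]) (by simp [hJ, hh]) ?_
    rwa [hJ, trace_fin_two_of, add_comm, ← trace_fin_two]
  exact (Commute.conj_iff J).1 hcomm

end Triangular

/-! ### Iterated commutators near the identity -/

section Backtracking

lemma axisMatrix_eq_or_eq_neg_of_commute {a b c a' b' c' : ℝ}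
    (hcomm : Commute (axisMatrix a b c) (axisMatrix a' b' c'))
    (hsq : a' ^ 2 + b' * c' = a ^ 2 + b * c) (h0 : a ^ 2 + b * c ≠ 0) :
    axisMatrix a' b' c' = axisMatrix a b c ∨ axisMatrix a' b' c' = axisMatrix (-a) (-b) (-c) := by
  have hentry (i j) := congrFun (congrFun hcomm.eq i) j
  have h00 := hentry 0 0
  have h01 := hentry 0 1
  have h10 := hentry 1 0
  simp only [axisMatrix, mul_apply, Fin.sum_univ_two, of_apply, cons_val', cons_val_zero,
    cons_val_one, cons_val_fin_one] at h00 h01 h10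
  have ha : (a ^ 2 + b * c) * a' = (a * a' + b * c') * a := by linear_combination b * h10 / 2
  have hb : (a ^ 2 + b * c) * b' = (a * a' + b * c') * b := by
    linear_combination a * h01 / 2 - b * h00
  have hc : (a ^ 2 + b * c) * c' = (a * a' + b * c') * c := by linear_combination -a * h10 / 2
  have hI : (a * a' + b * c') ^ 2 = (a ^ 2 + b * c) ^ 2 := by
    linear_combination (a ^ 2 + b * c) * hsq - a' * ha - b' * hc + (a * a' + b * c') * h00
  rcases sq_eq_sq_iff_eq_or_eq_neg.1 hI with hI | hI <;> rw [hI] at ha hb hc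
  · left
    rw [mul_left_cancel₀ h0 ha, mul_left_cancel₀ h0 hb, mul_left_cancel₀ h0 hc]
  · right
    simp only [neg_mul, ← mul_neg] at ha hb hc
    rw [mul_left_cancel₀ h0 ha, mul_left_cancel₀ h0 hb, mul_left_cancel₀ h0 hc]

lemma eq_or_eq_inv_of_commute {k w : SL2R} (hkw : Commute k w) (htr : w.1.trace = k.1.trace)
    (hk : k.1.trace ^ 2 ≠ 4) : w = k ∨ w = k⁻¹ := by
  obtain ⟨a, b, c, habc, hX⟩ := exists_coe_eq_smul_one_add_axisMatrix k
  obtain ⟨a', b', c', habc', hX'⟩ := exists_coe_eq_smul_one_add_axisMatrix w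
  rw [htr] at habc' hX'
  have hcomm : Commute (axisMatrix a b c) (axisMatrix a' b' c') := by
    have hkw' : Commute k.1 w.1 := congrArg Subtype.val hkw
    rw [← sub_eq_of_eq_add' hX, ← sub_eq_of_eq_add' hX']
    have hleft (Y : Matrix (Fin 2) (Fin 2) ℝ) (t : ℝ) : Commute (t • 1) Y :=
      (Commute.one_left Y).smul_left t
    exact (hkw'.sub_left (hleft _ _)).sub_right (hleft _ _).symm
  have h0 : a ^ 2 + b * c ≠ 0 := fun h0 => hk (by linarith)
  rcases axisMatrix_eq_or_eq_neg_of_commute hcomm (habc'.trans habc.symm) h0 with h | h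
  · exact .inl (Subtype.ext (by rw [hX, hX', h]))
  · refine .inr (Subtype.ext ?_)
    rw [hX', h, axisMatrix_neg, ← add_right_inj k.1, coe_add_coe_inv]
    nth_rw 1 [hX]
    module

lemma trace_eq_zero_of_mul_eq_inv_mul {k c : SL2R} (hkc : c * k = k⁻¹ * c)
    (hk : k.1.trace ^ 2 ≠ 4) : c.1.trace = 0 := by
  have hinv := coe_add_coe_inv k
  have hKi : k.1 * (k⁻¹).1 = 1 := congrArg Subtype.val (mul_inv_cancel k)
  have hkc' : c.1 * k.1 = (k⁻¹).1 * c.1 := congrArg Subtype.val hkc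
  have hck : 2 * (c.1 * k.1).trace = k.1.trace * c.1.trace := by
    have := congrArg (fun X => (c.1 * X).trace) hinv
    rw [Matrix.mul_add, trace_add, trace_mul_comm c.1 (k⁻¹).1, ← hkc'] at this
    simpa [two_mul] using this
  have hckk : 2 * c.1.trace = k.1.trace * (c.1 * k.1).trace := by
    have hsum : c.1 * k.1 * k.1 + c.1 = k.1.trace • (c.1 * k.1) := by
      have := congrArg (c.1 * k.1 * ·) hinv
      rwa [Matrix.mul_add, Matrix.mul_assoc c.1 k.1 (k⁻¹).1, hKi, Matrix.mul_one, mul_smul_comm,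
        Matrix.mul_one] at this
    have hconj : (c.1 * k.1 * k.1).trace = c.1.trace := by
      rw [hkc', trace_mul_cycle, hKi, Matrix.one_mul]
    simpa [hconj, two_mul] using congrArg trace hsum
  have hzero : (k.1.trace ^ 2 - 4) * c.1.trace = 0 := by
    linear_combination -2 * hckk - k.1.trace * hck
  exact (mul_eq_zero.1 hzero).resolve_left (sub_ne_zero.2 hk)

-- An element commuting with its conjugate `c * k * c⁻¹` is fixed or inverted by `c`, and only
-- elements of trace zero invert.
lemma commute_of_commutator_commutator_eq_one {k c : SL2R} (hk : k.1.trace ^ 2 ≠ 4)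
    (hc : c.1.trace ≠ 0) (h : ⁅k, ⁅k, c⁆⁆ = 1) : Commute k c := by
  have hcomm : Commute k (c * k * c⁻¹) := by
    have : Commute k (k⁻¹ * ⁅k, c⁆) :=
      (Commute.refl k).inv_right.mul_right (commutatorElement_eq_one_iff_commute.1 h)
    simpa [commutatorElement_def, mul_assoc] using this.inv_right
  have htr : (c * k * c⁻¹).1.trace = k.1.trace := by
    simp only [Matrix.SpecialLinearGroup.coe_mul]
    rw [trace_mul_cycle, ← Matrix.SpecialLinearGroup.coe_mul, inv_mul_cancel,
      Matrix.SpecialLinearGroup.coe_one, Matrix.one_mul]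
  rcases eq_or_eq_inv_of_commute hcomm htr hk with heq | heq
  · exact (mul_inv_eq_iff_eq_mul.1 heq).symm
  · exact absurd (trace_eq_zero_of_mul_eq_inv_mul (mul_inv_eq_iff_eq_mul.1 heq) hk) hc

end Backtracking

section Zassenhaus

section SeminormedRing

variable {A : Type*} [SeminormedRing A]

/-- A unit and its inverse are both within `r` of `1`. -/
def IsNearOne (r : ℝ) (a : Aˣ) : Prop := ‖(a : A) - 1‖ ≤ r ∧ ‖(↑a⁻¹ : A) - 1‖ ≤ r

variable {a b : Aˣ} {r s : ℝ}

lemma IsNearOne.mono (h : IsNearOne r a) (hrs : r ≤ s) : IsNearOne s a :=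
  ⟨h.1.trans hrs, h.2.trans hrs⟩

lemma isNearOne_inv_mul {R : ℝ} (ha : ‖(↑a⁻¹ : A)‖ ≤ R)
    (hb : ‖(↑b⁻¹ : A)‖ ≤ R) (hab : ‖(b : A) - a‖ ≤ r) : IsNearOne (R * r) (a⁻¹ * b) := by
  have hR : 0 ≤ R := (norm_nonneg _).trans ha
  constructor
  · have : (↑(a⁻¹ * b) : A) - 1 = ↑a⁻¹ * (b - a) := by simp [mul_sub]
    rw [this]
    exact (norm_mul_le _ _).trans (by gcongr)
  · have : (↑(a⁻¹ * b)⁻¹ : A) - 1 = ↑b⁻¹ * (a - b) := by simp [mul_sub]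
    rw [this]
    rw [norm_sub_rev] at hab
    exact (norm_mul_le _ _).trans (by gcongr)

lemma IsNearOne.norm_inv_le [NormOneClass A] (h : IsNearOne r a) : ‖(↑a⁻¹ : A)‖ ≤ 1 + r := by
  simpa using (norm_le_norm_add_norm_sub' _ 1).trans (add_le_add_right h.2 ‖(1 : A)‖)

lemma IsNearOne.commutator {C : ℝ} (ha : ‖(↑a⁻¹ : A)‖ * ‖(↑b⁻¹ : A)‖ ≤ C)
    (hab : ‖(a : A) - 1‖ * ‖(b : A) - 1‖ ≤ s) :
    IsNearOne (2 * C * s) ⁅a, b⁆ := by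
  have hC : 0 ≤ C := (by positivity : (0 : ℝ) ≤ _).trans ha
  constructor
  · calc _ ≤ 2 * ‖(↑a⁻¹ : A)‖ * ‖(↑b⁻¹ : A)‖ * ‖(a : A) - 1‖ * ‖(b : A) - 1‖ :=
          norm_commutator_units_sub_one_le a b
      _ = 2 * (‖(↑a⁻¹ : A)‖ * ‖(↑b⁻¹ : A)‖) * (‖(a : A) - 1‖ * ‖(b : A) - 1‖) := by ring
      _ ≤ 2 * C * s := by gcongr
  · rw [commutatorElement_inv]
    calc _ ≤ 2 * ‖(↑b⁻¹ : A)‖ * ‖(↑a⁻¹ : A)‖ * ‖(b : A) - 1‖ * ‖(a : A) - 1‖ :=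
          norm_commutator_units_sub_one_le b a
      _ = 2 * (‖(↑a⁻¹ : A)‖ * ‖(↑b⁻¹ : A)‖) * (‖(a : A) - 1‖ * ‖(b : A) - 1‖) := by ring
      _ ≤ 2 * C * s := by gcongr

lemma IsNearOne.commutator_of_le [NormOneClass A] (ha : IsNearOne (1 / 10) a) (hb : IsNearOne r b)
    (hr : r ≤ 1 / 4) : IsNearOne (r / 2) ⁅a, b⁆ := by
  have hr0 : 0 ≤ r := (norm_nonneg _).trans hb.1
  have hinv : ‖(↑a⁻¹ : A)‖ * ‖(↑b⁻¹ : A)‖ ≤ (1 + 1 / 10) * (1 + 1 / 4) :=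
    mul_le_mul ha.norm_inv_le (hb.norm_inv_le.trans (by linarith)) (norm_nonneg _) (by norm_num)
  have h := IsNearOne.commutator hinv (mul_le_mul ha.1 hb.1 (norm_nonneg _) (by norm_num))
  exact h.mono (by linarith)

lemma isNearOne_iterate_commutator [NormOneClass A] (ha : IsNearOne (1 / 10) a)
    (hb : IsNearOne (1 / 4) b) (n : ℕ) :
    IsNearOne (1 / 4 * (1 / 2) ^ n) ((fun x => ⁅a, x⁆)^[n] b) := by
  induction n with
  | zero => simpa using hb
  | succ n ih =>
    rw [Function.iterate_succ_apply']
    convert ha.commutator_of_le ih (mul_le_of_le_one_right (by norm_num)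
      (pow_le_one₀ (by norm_num) (by norm_num))) using 1
    ring

end SeminormedRing

attribute [local instance] Matrix.linftyOpNormedRing Matrix.linftyOpNormedAlgebra
  Matrix.linfty_opNormOneClass

lemma trace_ne_zero_of_isNearOne {c : SL2R} (hc : IsNearOne (1 / 4) c.toGL) : c.1.trace ≠ 0 := by
  intro htr
  have hsum : (c.1 - 1) + ((c⁻¹).1 - 1) = (-2 : ℝ) • 1 := by
    have hinv := coe_add_coe_inv c
    rw [htr, zero_smul] at hinv
    rw [sub_add_sub_comm, hinv]
    module
  have hnorm := norm_add_le_of_le hc.1 hc.2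
  have h2 : ‖(c.1 - 1) + ((c⁻¹).1 - 1)‖ = 2 := by
    rw [hsum, norm_smul, norm_one]
    norm_num
  linarith [h2 ▸ hnorm]

lemma commute_of_iterate_commutator_eq_one {u g : SL2R} (hu : u.1.trace ^ 2 ≠ 4)
    (htr : ∀ n, ((fun x => ⁅u, x⁆)^[n] g).1.trace ≠ 0) {n : ℕ}
    (hn : (fun x => ⁅u, x⁆)^[n + 1] g = 1) : Commute u g := by
  induction n with
  | zero => exact commutatorElement_eq_one_iff_commute.1 hn
  | succ n ih =>
    rw [Function.iterate_succ_apply', Function.iterate_succ_apply'] at hn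
    refine ih ?_
    rw [Function.iterate_succ_apply', commutatorElement_eq_one_iff_commute]
    exact commute_of_commutator_commutator_eq_one hu (htr n) hn

lemma IsDiscreteSubgroup.commute_of_isNearOne {Γ : Subgroup SL2R} (hΓ : IsDiscreteSubgroup Γ)
    {u g : SL2R} (huΓ : u ∈ Γ) (hgΓ : g ∈ Γ) (hu : u.1.trace ^ 2 ≠ 4) (hg : g.1.trace ≠ 0) {r : ℝ}
    (hur : IsNearOne r u.toGL) (hr : r ≤ 1 / 10) (hrg : 10 * r * (‖(g⁻¹).1‖ * ‖g.1 - 1‖) ≤ 1) :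
    Commute u g := by
  have hu10 : IsNearOne (1 / 10) u.toGL := hur.mono hr
  have hfirst : IsNearOne (1 / 4) ⁅u.toGL, g.toGL⁆ := by
    have hinv : ‖(u⁻¹).1‖ * ‖(g⁻¹).1‖ ≤ (1 + 1 / 10) * ‖(g⁻¹).1‖ :=
      mul_le_mul_of_nonneg_right hu10.norm_inv_le (norm_nonneg _)
    have hsub : ‖u.1 - 1‖ * ‖g.1 - 1‖ ≤ r * ‖g.1 - 1‖ :=
      mul_le_mul_of_nonneg_right hur.1 (norm_nonneg _)
    exact (IsNearOne.commutator (a := u.toGL) (b := g.toGL) hinv hsub).mono (by linarith)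
  have hnear (n : ℕ) : IsNearOne (1 / 4 * (1 / 2) ^ n) ((fun x => ⁅u, x⁆)^[n + 1] g).toGL := by
    have hsemi : Function.Semiconj Matrix.SpecialLinearGroup.toGL (fun x => ⁅u, x⁆)
        (fun x => ⁅u.toGL, x⁆) := fun x => map_commutatorElement _ u x
    rw [hsemi.iterate_right, Function.iterate_succ_apply]
    exact isNearOne_iterate_commutator hu10 hfirst n
  have hmem (n : ℕ) : (fun x => ⁅u, x⁆)^[n] g ∈ Γ := by
    induction n with
    | zero => exact hgΓ
    | succ n ih =>
      rw [Function.iterate_succ_apply']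
      exact Γ.mul_mem (Γ.mul_mem (Γ.mul_mem huΓ ih) (Γ.inv_mem huΓ)) (Γ.inv_mem ih)
  have hlim : Tendsto (fun n => ((fun x => ⁅u, x⁆)^[n + 1] g).1) atTop (𝓝 1) := by
    refine tendsto_iff_norm_sub_tendsto_zero.2 ?_
    refine squeeze_zero (fun _ => norm_nonneg _) (fun n => (hnear n).1) ?_
    have hpow := tendsto_pow_atTop_nhds_zero_of_lt_one (one_half_pos (α := ℝ)).le one_half_lt_one
    simpa only [mul_zero] using hpow.const_mul (1 / 4)
  obtain ⟨n, hn⟩ := hΓ.exists_eq_one (fun n => hmem (n + 1)) hlim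
  refine commute_of_iterate_commutator_eq_one hu (fun m => ?_) hn
  cases m with
  | zero => exact hg
  | succ m =>
    have hle : (1 / 4 * (1 / 2) ^ m : ℝ) ≤ 1 / 4 :=
      mul_le_of_le_one_right (by norm_num) (pow_le_one₀ (by norm_num) (by norm_num))
    exact trace_ne_zero_of_isNearOne ((hnear m).mono hle)

/-! ### Translations along nearby axes -/

lemma norm_axisMatrix_le {p y z a b : ℝ} (hp : |p| ≤ a) (hy : |y| ≤ b) (hz : |z| ≤ b) :
    ‖axisMatrix p y z‖ ≤ a + b := by
  have hab : 0 ≤ a + b := add_nonneg ((abs_nonneg p).trans hp) ((abs_nonneg y).trans hy)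
  rw [linfty_opNorm_def]
  lift a + b to NNReal using hab with c hc
  refine NNReal.coe_le_coe.2 (Finset.sup_le fun i _ => ?_)
  rw [← NNReal.coe_le_coe]
  fin_cases i <;> simp [axisMatrix, Fin.sum_univ_two] <;> linarith

lemma IsDiscreteSubgroup.commute_of_norm_sub_le {Γ : Subgroup SL2R} (hΓ : IsDiscreteSubgroup Γ)
    {g h : SL2R} (hgΓ : g ∈ Γ) (hhΓ : h ∈ Γ) (htr : g.1.trace ≠ 0)
    (htr' : (g⁻¹ * h).1.trace ^ 2 ≠ 4) {R r : ℝ} (hR : 1 ≤ R) (hg : ‖g.1 - 1‖ ≤ R)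
    (hg' : ‖(g⁻¹).1‖ ≤ R) (hh' : ‖(h⁻¹).1‖ ≤ R) (hsub : ‖h.1 - g.1‖ ≤ r)
    (hsmall : 10 * r * R ^ 3 ≤ 1) : Commute g h := by
  have hr : 0 ≤ r := (norm_nonneg _).trans hsub
  have hnear : IsNearOne (R * r) (g⁻¹ * h).toGL := by
    rw [map_mul, map_inv]
    exact isNearOne_inv_mul hg' hh' hsub
  have hRr : R * r ≤ 1 / 10 := by
    have := mul_le_mul_of_nonneg_right (le_self_pow₀ hR three_ne_zero) hr
    linarith
  have hprod : 10 * (R * r) * (‖(g⁻¹).1‖ * ‖g.1 - 1‖) ≤ 1 := by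
    refine le_trans ?_ hsmall
    calc _ ≤ 10 * (R * r) * (R * R) := by gcongr
      _ = 10 * r * R ^ 3 := by ring
  have hcomm := hΓ.commute_of_isNearOne (Γ.mul_mem (Γ.inv_mem hgΓ) hhΓ) hgΓ htr' htr hnear hRr hprod
  simpa using (Commute.refl g).mul_right hcomm.symm

lemma norm_axialTranslation_sub_le (p y z x : ℝ) (hyz : |y| = |z|) :
    ‖axialTranslation (axisMatrix p (-y) (-z)) x - axialTranslation (axisMatrix p y z) x‖ ≤
      2 * (|sinh x| * |y|) := by
  have hnorm : ‖axisMatrix 0 (-y - y) (-z - z)‖ ≤ 0 + 2 * |y| := by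
    refine norm_axisMatrix_le abs_zero.le ?_ ?_
    · rw [← neg_add', abs_neg, ← two_mul, abs_mul, abs_two]
    · rw [← neg_add', abs_neg, ← two_mul, abs_mul, abs_two, hyz]
  rw [axialTranslation, axialTranslation, add_sub_add_left_eq_sub, ← smul_sub, axisMatrix_sub,
    sub_self, norm_smul, Real.norm_eq_abs]
  linarith [mul_le_mul_of_nonneg_left hnorm (abs_nonneg (sinh x))]

lemma trace_inv_mul_of_axialTranslation {g h : SL2R} {p y z x : ℝ} (hpyz : p ^ 2 + y * z = 1)
    (hg : g.1 = axialTranslation (axisMatrix p y z) x)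
    (hh : h.1 = axialTranslation (axisMatrix p (-y) (-z)) x) :
    (g⁻¹ * h).1.trace = 2 + 4 * sinh x ^ 2 * (y * z) := by
  rw [Matrix.SpecialLinearGroup.coe_mul, coe_inv_eq_axialTranslation (axisMatrix_mul_self hpyz) hg,
    hh, axialTranslation_axisMatrix, axialTranslation_axisMatrix, mul_fin_two, trace_fin_two_of,
    Real.cosh_neg, Real.sinh_neg]
  linear_combination 2 * Real.cosh_sq x - 2 * sinh x ^ 2 * hpyz

lemma trace_inv_mul_sq_ne_four {g h : SL2R} {p y z x : ℝ} (hpyz : p ^ 2 + y * z = 1)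
    (hg : g.1 = axialTranslation (axisMatrix p y z) x)
    (hh : h.1 = axialTranslation (axisMatrix p (-y) (-z)) x) (hx : x ≠ 0) (h0 : y * z ≠ 0)
    (hlt : sinh x ^ 2 * |y * z| < 1) : (g⁻¹ * h).1.trace ^ 2 ≠ 4 := by
  have hne : sinh x ^ 2 * (y * z) ≠ 0 := mul_ne_zero (by simpa using hx) h0
  have hgt : -1 < sinh x ^ 2 * (y * z) :=
    neg_lt_of_abs_lt (by rwa [abs_mul, abs_of_nonneg (sq_nonneg _)])
  rw [trace_inv_mul_of_axialTranslation hpyz hg hh]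
  intro h4
  have hprod : sinh x ^ 2 * (y * z) * (sinh x ^ 2 * (y * z) + 1) = 0 := by
    linear_combination h4 / 16
  exact (mul_ne_zero hne (by linarith)) hprod

lemma IsDiscreteSubgroup.commute_of_axialTranslation {Γ : Subgroup SL2R}
    (hΓ : IsDiscreteSubgroup Γ) {g h : SL2R} (hgΓ : g ∈ Γ) (hhΓ : h ∈ Γ) {p y z x R : ℝ}
    (hpyz : p ^ 2 + y * z = 1) (hyz : |y| = |z|) (hy : y ≠ 0) (hx : 0 < x)
    (hg : g.1 = axialTranslation (axisMatrix p y z) x)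
    (hh : h.1 = axialTranslation (axisMatrix p (-y) (-z)) x)
    (hR : cosh x + sinh x * (|p| + |y|) ≤ R) (hsmall : 20 * (sinh x * |y|) * R ^ 3 ≤ 1) :
    Commute g h := by
  have hs : 0 < sinh x := Real.sinh_pos_iff.2 hx
  have hR1 : 1 ≤ R := le_trans (le_add_of_le_of_nonneg (Real.one_le_cosh x) (by positivity)) hR
  have hbound {X : Matrix (Fin 2) (Fin 2) ℝ} (hX : ‖X‖ ≤ |p| + |y|) :
      cosh x + |sinh x| * ‖X‖ ≤ R := by
    rw [abs_of_pos hs]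
    exact le_trans (by gcongr) hR
  have hinv {k : SL2R} {X : Matrix (Fin 2) (Fin 2) ℝ} (hX : X * X = 1) (hX' : ‖X‖ ≤ |p| + |y|)
      (hk : k.1 = axialTranslation X x) : ‖(k⁻¹).1‖ ≤ R := by
    rw [coe_inv_eq_axialTranslation hX hk]
    exact (norm_axialTranslation_le _ _).trans (by simpa using hbound hX')
  have hX : ‖axisMatrix p y z‖ ≤ |p| + |y| := norm_axisMatrix_le le_rfl le_rfl hyz.ge
  have hX' : ‖axisMatrix p (-y) (-z)‖ ≤ |p| + |y| :=
    norm_axisMatrix_le le_rfl (abs_neg y).le ((abs_neg z).trans hyz.symm).le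
  have htr : (g⁻¹ * h).1.trace ^ 2 ≠ 4 := by
    have hsy : sinh x * |y| ≤ 1 / 20 := by
      have := mul_le_mul_of_nonneg_left (one_le_pow₀ hR1 (n := 3))
        (by positivity : 0 ≤ 20 * (sinh x * |y|))
      linarith
    refine trace_inv_mul_sq_ne_four hpyz hg hh hx.ne' (mul_ne_zero hy ?_) ?_
    · exact abs_ne_zero.1 (hyz ▸ abs_ne_zero.2 hy)
    · calc sinh x ^ 2 * |y * z| = (sinh x * |y|) ^ 2 := by rw [abs_mul, ← hyz]; ring
        _ ≤ (1 / 20) ^ 2 := by gcongr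
        _ < 1 := by norm_num
  refine hΓ.commute_of_norm_sub_le hgΓ hhΓ ?_ htr hR1 ?_ (hinv (axisMatrix_mul_self hpyz) hX hg)
    (hinv (axisMatrix_mul_self (by rwa [neg_mul_neg])) hX' hh) ?_
    (r := 2 * (sinh x * |y|)) (by linarith)
  · rw [hg, trace_axialTranslation_axisMatrix]
    exact (mul_pos two_pos (Real.cosh_pos x)).ne'
  · rw [hg]
    exact (norm_axialTranslation_sub_one_le _ _).trans (hbound hX)
  · rw [hg, hh]
    exact (norm_axialTranslation_sub_le p y z x hyz).trans_eq (by rw [abs_of_pos hs])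

end Zassenhaus

lemma ten_le_sinh {w : ℝ} (hw : 3 ≤ w) : 10 ≤ sinh w := by
  have hexp : (20.08 : ℝ) ≤ Real.exp w := by
    calc (20.08 : ℝ) ≤ 2.7182818283 ^ 3 := by norm_num
      _ ≤ Real.exp 1 ^ 3 := by gcongr; exact Real.exp_one_gt_d9.le
      _ = Real.exp 3 := by rw [← Real.exp_nat_mul]; norm_num
      _ ≤ Real.exp w := Real.exp_le_exp.2 hw
  have hinv : Real.exp (-w) ≤ 0.05 := by
    rw [Real.exp_neg]
    exact inv_le_of_inv_le₀ (by norm_num) (by linarith)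
  rw [Real.sinh_eq]
  linarith

lemma sinh_mul_pow_three_le_of_le {x : ℝ} (hx : 0 ≤ x) (hx' : x ≤ 1 / 5) :
    20 * sinh x * (cosh x + 6 / 5 * sinh x) ^ 3 ≤ 10 := by
  have hexp : Real.exp x ≤ 1.2215 := by
    refine le_of_pow_le_pow_left₀ (n := 5) (by norm_num) (by norm_num) ?_
    calc Real.exp x ^ 5 = Real.exp (5 * x) := by rw [← Real.exp_nat_mul]; norm_num
      _ ≤ Real.exp 1 := Real.exp_le_exp.2 (by linarith)
      _ ≤ 1.2215 ^ 5 := Real.exp_one_lt_d9.le.trans (by norm_num)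
  have hinv : 0.8186 ≤ Real.exp (-x) := by
    rw [Real.exp_neg]
    exact le_inv_of_le_inv₀ (Real.exp_pos x) (hexp.trans (by norm_num))
  have hsinh0 : 0 ≤ sinh x := Real.sinh_nonneg_iff.2 hx
  have hsinh : sinh x ≤ 0.202 := by
    rw [Real.sinh_eq]
    linarith
  have hcosh : cosh x ≤ 1.0203 := by
    refine le_of_sq_le_sq ?_ (by norm_num)
    nlinarith [Real.cosh_sq x]
  calc _ ≤ (20 * 0.202 * (1.0203 + 6 / 5 * 0.202) ^ 3 : ℝ) := by
        gcongr
    _ ≤ 10 := by norm_num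

lemma sinh_mul_pow_three_le_of_ge {x : ℝ} {N : ℕ} (hx : 1 / 5 ≤ x) (hN : 27 ≤ N) :
    20 * sinh x * (cosh x + 6 / 5 * sinh x) ^ 3 ≤ sinh (N * x) := by
  set E := Real.exp x
  have hE1 : 1.2 ≤ E := by linarith [Real.add_one_le_exp x]
  have hinv : 0 < Real.exp (-x) := Real.exp_pos _
  have hsinh : sinh x ≤ E / 2 := by
    rw [Real.sinh_eq]
    linarith
  have hsum : cosh x + 6 / 5 * sinh x ≤ 1.1 * E := by
    rw [Real.sinh_eq, Real.cosh_eq]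
    linarith
  have hpow : 28 * E ^ 4 ≤ Real.exp (N * x) := by
    calc 28 * E ^ 4 ≤ 1.2 ^ 23 * E ^ 4 := by gcongr; norm_num
      _ ≤ E ^ 23 * E ^ 4 := by gcongr
      _ = E ^ 27 := by ring
      _ ≤ E ^ N := pow_le_pow_right₀ (by linarith) hN
      _ = Real.exp (N * x) := (Real.exp_nat_mul x N).symm
  have hneg : Real.exp (-(N * x)) ≤ E ^ 4 :=
    (Real.exp_le_one_iff.2 (neg_nonpos.2 (by positivity))).trans (one_le_pow₀ (by linarith))
  calc _ ≤ 20 * (E / 2) * (1.1 * E) ^ 3 := by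
        have := Real.sinh_nonneg_iff.2 (show 0 ≤ x by linarith)
        gcongr
    _ = 13.31 * E ^ 4 := by ring
    _ ≤ sinh (N * x) := by
        rw [Real.sinh_eq]
        have : 0 ≤ E ^ 4 := by positivity
        linarith

lemma sinh_mul_pow_three_le {x : ℝ} {N : ℕ} (hx : 0 ≤ x) (hN : 27 ≤ N) (hNx : 3 ≤ N * x) :
    20 * sinh x * (cosh x + 6 / 5 * sinh x) ^ 3 ≤ sinh (N * x) := by
  rcases le_total x (1 / 5) with hx' | hx'
  · exact (sinh_mul_pow_three_le_of_le hx hx').trans (ten_le_sinh hNx)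
  · exact sinh_mul_pow_three_le_of_ge hx' hN

/-! ### Translation length and trace -/

lemma im_specialLinearGroup_smul (g : SL2R) (z : ℍ) :
    (g • z).im = z.im / Complex.normSq (g 1 0 * z + g 1 1) := by
  rw [MulAction.compHom_smul_def, im_smul_eq_div_normSq, Matrix.SpecialLinearGroup.det_mapGL]
  simp [denom]

lemma cosh_dist_smul_eq_one_add_normSq (g : SL2R) (z : ℍ) :
    cosh (dist z (g • z)) = 1 +
      Complex.normSq (g 1 0 * z ^ 2 + (g 1 1 - g 0 0) * z - g 0 1) / (2 * z.im ^ 2) := by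
  set D : ℂ := g 1 0 * z + g 1 1 with hD
  have hD0 : D ≠ 0 := by
    intro h0
    have := (g • z).im_pos
    rw [im_specialLinearGroup_smul, ← hD, h0] at this
    simp at this
  have hsub : (z : ℂ) - (g • z : ℍ) =
      (g 1 0 * z ^ 2 + (g 1 1 - g 0 0) * z - g 0 1) / D := by
    rw [coe_specialLinearGroup_apply, Algebra.algebraMap_self_apply, Algebra.algebraMap_self_apply,
      Algebra.algebraMap_self_apply, Algebra.algebraMap_self_apply, ← hD, eq_div_iff hD0, sub_mul,
      div_mul_cancel₀ _ hD0, hD]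
    ring
  have hn : Complex.normSq D ≠ 0 := Complex.normSq_eq_zero.not.2 hD0
  rw [cosh_dist, Complex.dist_eq, hsub, Complex.sq_norm, map_div₀, im_specialLinearGroup_smul, ← hD]
  have := z.im_ne_zero
  field_simp

lemma cosh_dist_smul (g : SL2R) (z : ℍ) :
    cosh (dist z (g • z)) = g.1.trace ^ 2 / 2 - 1 +
      (g 1 0 * (z.re ^ 2 + z.im ^ 2) + (g 1 1 - g 0 0) * z.re - g 0 1) ^ 2 / (2 * z.im ^ 2) := by
  have hdet := g.det_coe
  rw [det_fin_two] at hdet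
  have hnormSq : Complex.normSq (g 1 0 * z ^ 2 + (g 1 1 - g 0 0) * z - g 0 1) =
      (g 1 0 * (z.re ^ 2 + z.im ^ 2) + (g 1 1 - g 0 0) * z.re - g 0 1) ^ 2 +
        z.im ^ 2 * (g.1.trace ^ 2 - 4) := by
    rw [trace_fin_two]
    simp [Complex.normSq_apply, sq]
    linear_combination -4 * z.im ^ 2 * hdet
  rw [cosh_dist_smul_eq_one_add_normSq, hnormSq]
  have := z.im_ne_zero
  field_simp
  ring

-- The equation describes the axis of `g`, a half circle or a vertical line.
lemma exists_mem_axis {g : SL2R} (hg : 4 < g.1.trace ^ 2) :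
    ∃ z : ℍ, g 1 0 * (z.re ^ 2 + z.im ^ 2) + (g 1 1 - g 0 0) * z.re - g 0 1 = 0 := by
  have hdet := g.det_coe
  rw [det_fin_two] at hdet
  rw [trace_fin_two] at hg
  by_cases hc : g 1 0 = 0
  · have hne : g 1 1 - g 0 0 ≠ 0 := by
      intro h0
      have : (g 0 0 + g 1 1) ^ 2 = 4 := by
        linear_combination (g 1 1 - g 0 0) * h0 + 4 * hdet + 4 * g 0 1 * hc
      exact hg.ne' this
    refine ⟨⟨⟨g 0 1 / (g 1 1 - g 0 0), 1⟩, one_pos⟩, ?_⟩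
    simp [hc, mul_div_cancel₀ _ hne]
  · have hp : 0 < ((g 0 0 + g 1 1) ^ 2 - 4) / (4 * (g 1 0) ^ 2) := by
      positivity
    refine ⟨⟨⟨(g 0 0 - g 1 1) / (2 * g 1 0), √(((g 0 0 + g 1 1) ^ 2 - 4) / (4 * (g 1 0) ^ 2))⟩,
      Real.sqrt_pos.2 hp⟩, ?_⟩
    simp only [UpperHalfPlane.re, UpperHalfPlane.im]
    rw [Real.sq_sqrt hp.le]
    field_simp
    linear_combination 16 * hdet

lemma cosh_translationLength {g : SL2R} (hg : 4 < g.1.trace ^ 2) :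
    cosh (translationLength g) = g.1.trace ^ 2 / 2 - 1 := by
  obtain ⟨z, hz⟩ := exists_mem_axis hg
  have hcosh : cosh (dist z (g • z)) = g.1.trace ^ 2 / 2 - 1 := by
    rw [cosh_dist_smul, hz]
    simp
  have hmin (w : ℍ) : dist z (g • z) ≤ dist w (g • w) := by
    rw [← abs_of_nonneg (dist_nonneg (x := z)), ← abs_of_nonneg (dist_nonneg (x := w)),
      ← Real.cosh_le_cosh, hcosh, cosh_dist_smul]
    exact le_add_of_nonneg_right (by positivity)
  have hbdd : BddBelow (Set.range fun w : ℍ => dist w (g • w)) :=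
    ⟨0, Set.forall_mem_range.2 fun _ => dist_nonneg⟩
  rw [translationLength, ((ciInf_le hbdd z).antisymm (le_ciInf hmin)), hcosh]

lemma abs_trace_eq_two_mul_cosh {g : SL2R} (hg : 2 < |g.1.trace|) :
    |g.1.trace| = 2 * cosh (translationLength g / 2) := by
  have hg4 : 4 < g.1.trace ^ 2 := by
    rw [← sq_abs]
    nlinarith
  have hdouble : cosh (translationLength g) = 2 * cosh (translationLength g / 2) ^ 2 - 1 := by
    rw [← mul_div_cancel₀ (translationLength g) two_ne_zero, Real.cosh_two_mul, Real.sinh_sq,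
      mul_div_cancel_left₀ _ two_ne_zero]
    ring
  rw [cosh_translationLength hg4] at hdouble
  have hcosh := Real.cosh_pos (translationLength g / 2)
  rw [← abs_of_pos (mul_pos two_pos hcosh), ← sq_eq_sq_iff_abs_eq_abs]
  linarith

/-! ### Free powers of hyperbolic elements -/

section SymmetricPosition

lemma exists_conj_eq_axialTranslation_neg {g h : SL2R} {x : ℝ} (hx : x ≠ 0)
    (hg : g.1.trace = 2 * cosh x) (hh : h.1.trace = 2 * cosh x)
    (hgh : 2 * cosh x ^ 2 ≤ (g * h).1.trace) :
    ∃ (M : SL2R) (p y z : ℝ), 0 < p ∧ 1 ≤ 2 * p ^ 2 ∧ p ^ 2 + y * z = 1 ∧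
      (M * g * M⁻¹).1 = axialTranslation (axisMatrix p y z) x ∧
      (M * h * M⁻¹).1 = axialTranslation (axisMatrix p (-y) (-z)) x := by
  obtain ⟨a, b, c, habc, hg⟩ := exists_eq_axialTranslation hx hg
  obtain ⟨a', b', c', habc', hh⟩ := exists_eq_axialTranslation hx hh
  have hnonneg : 0 ≤ 2 * a * a' + b * c' + c * b' := by
    rw [trace_mul_eq_of_axialTranslation hg hh] at hgh
    have hs : 0 < sinh x ^ 2 := sq_pos_of_ne_zero (Real.sinh_eq_zero.not.2 hx)
    exact nonneg_of_mul_nonneg_right (by linarith) hs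
  obtain ⟨M, p, y, z, hp, hp2, hpyz, hMg, hMh⟩ :=
    exists_semiconjBy_axisMatrix_neg habc habc' hnonneg
  exact ⟨M, p, y, z, hp, hp2, hpyz, coe_conj_eq_axialTranslation hMg hg,
    coe_conj_eq_axialTranslation hMh hh⟩

variable {Γ : Subgroup SL2R}

lemma IsDiscreteSubgroup.commute_of_mul_eq_zero (hΓ : IsDiscreteSubgroup Γ) {g h : SL2R}
    (hgΓ : g ∈ Γ) (hhΓ : h ∈ Γ) {p y z x : ℝ} (hx : x ≠ 0) (hyz : y * z = 0)
    (hg : g.1 = axialTranslation (axisMatrix p y z) x)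
    (hh : h.1 = axialTranslation (axisMatrix p (-y) (-z)) x) : Commute g h := by
  have htr : g.1.trace ^ 2 ≠ 4 := by
    have := Real.one_lt_cosh.2 hx
    rw [hg, trace_axialTranslation_axisMatrix]
    nlinarith
  rw [axialTranslation_axisMatrix] at hg hh
  rcases mul_eq_zero.1 hyz with rfl | rfl
  · exact hΓ.commute_of_lowerTriangular hgΓ hhΓ (by simp [hg]) (by simp [hh]) htr
  · exact hΓ.commute_of_upperTriangular hgΓ hhΓ (by simp [hg]) (by simp [hh]) htr

lemma exists_conj_eq_axialTranslation_abs_eq {g h : SL2R} {p y z x : ℝ} (hyz : y * z ≠ 0)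
    (hg : g.1 = axialTranslation (axisMatrix p y z) x)
    (hh : h.1 = axialTranslation (axisMatrix p (-y) (-z)) x) :
    ∃ (M : SL2R) (y' z' : ℝ), y' * z' = y * z ∧ |y'| = |z'| ∧
      (M * g * M⁻¹).1 = axialTranslation (axisMatrix p y' z') x ∧
      (M * h * M⁻¹).1 = axialTranslation (axisMatrix p (-y') (-z')) x := by
  obtain ⟨M, y', z', hmul, habs, hMg, hMh⟩ :=
    exists_semiconjBy_axisMatrix_abs_eq (left_ne_zero_of_mul hyz) (right_ne_zero_of_mul hyz) p
  exact ⟨M, y', z', hmul, habs, coe_conj_eq_axialTranslation hMg hg,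
    coe_conj_eq_axialTranslation hMh hh⟩

variable {g h : SL2R} {x : ℝ} {N : ℕ}

lemma IsDiscreteSubgroup.isFreePair_pow_of_axialTranslation (hΓ : IsDiscreteSubgroup Γ)
    (hgΓ : g ∈ Γ) (hhΓ : h ∈ Γ) (hgh : ¬Commute g h) {p y z : ℝ} (hp : 0 < p)
    (hp2 : 1 ≤ 2 * p ^ 2) (hpyz : p ^ 2 + y * z = 1) (hyz : |y| = |z|) (hy : y ≠ 0) (hx : 0 < x)
    (hg : g.1 = axialTranslation (axisMatrix p y z) x)
    (hh : h.1 = axialTranslation (axisMatrix p (-y) (-z)) x) (hN : 27 ≤ N) (hNx : 3 ≤ N * x) :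
    IsFreePair (g ^ N) (h ^ N) := by
  have hpow {k : SL2R} {X : Matrix (Fin 2) (Fin 2) ℝ} (hX : X * X = 1)
      (hk : k.1 = axialTranslation X x) : (k ^ N).1 = axialTranslation X (N * x) := by
    rw [Matrix.SpecialLinearGroup.coe_pow, hk, axialTranslation_natCast_mul hX]
  by_cases hSy : 1 < sinh (N * x) * |y|
  · exact isFreePair_of_one_lt_sinh_mul_abs hpyz hp hp2 hyz (hpow (axisMatrix_mul_self hpyz) hg)
      (hpow (axisMatrix_mul_self (by rwa [neg_mul_neg])) hh) (by linarith) hSy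
  -- Now `|y| ≤ 1 / 10` and `|p| ≤ 11 / 10`, so `|p| + |y| ≤ 6 / 5`.
  refine absurd (hΓ.commute_of_axialTranslation hgΓ hhΓ hpyz hyz hy hx hg hh
    (R := cosh x + 6 / 5 * sinh x) ?_ ?_) hgh
  · have hy10 : |y| ≤ 1 / 10 := by
      have := mul_le_mul_of_nonneg_right (ten_le_sinh hNx) (abs_nonneg y)
      linarith
    have hp1 : |p| ≤ 11 / 10 := by
      refine abs_le_of_sq_le_sq ?_ (by norm_num)
      have : |y * z| ≤ 1 / 100 := by
        rw [abs_mul, ← hyz]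
        nlinarith [abs_nonneg y]
      linarith [neg_le_of_abs_le this]
    have := mul_le_mul_of_nonneg_left (add_le_add hp1 hy10) (Real.sinh_nonneg_iff.2 hx.le)
    linarith
  · calc 20 * (sinh x * |y|) * (cosh x + 6 / 5 * sinh x) ^ 3
        = 20 * sinh x * (cosh x + 6 / 5 * sinh x) ^ 3 * |y| := by ring
      _ ≤ sinh (N * x) * |y| := by gcongr; exact sinh_mul_pow_three_le hx.le hN hNx
      _ ≤ 1 := not_lt.1 hSy

lemma IsDiscreteSubgroup.isFreePair_pow_of_le_trace_mul (hΓ : IsDiscreteSubgroup Γ)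
    (hgΓ : g ∈ Γ) (hhΓ : h ∈ Γ) (hgh : ¬Commute g h) (hx : 0 < x) (hg : g.1.trace = 2 * cosh x)
    (hh : h.1.trace = 2 * cosh x) (hle : 2 * cosh x ^ 2 ≤ (g * h).1.trace) (hN : 27 ≤ N)
    (hNx : 3 ≤ N * x) : IsFreePair (g ^ N) (h ^ N) := by
  have hconj {Γ : Subgroup SL2R} {k : SL2R} (M : SL2R) (hk : k ∈ Γ) :
      M * k * M⁻¹ ∈ Γ.map (MulAut.conj M).toMonoidHom := Subgroup.mem_map_of_mem _ hk
  obtain ⟨M, p, y, z, hp, hp2, hpyz, hMg, hMh⟩ :=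
    exists_conj_eq_axialTranslation_neg hx.ne' hg hh hle
  have hyz : y * z ≠ 0 := fun h0 => hgh <| (Commute.conj_iff M).1 <|
    (hΓ.map_conj M).commute_of_mul_eq_zero (hconj M hgΓ) (hconj M hhΓ) hx.ne' h0 hMg hMh
  obtain ⟨M', y', z', hmul, habs, hg', hh'⟩ := exists_conj_eq_axialTranslation_abs_eq hyz hMg hMh
  have hfree := ((hΓ.map_conj M).map_conj M').isFreePair_pow_of_axialTranslation
    (hconj M' (hconj M hgΓ)) (hconj M' (hconj M hhΓ))
    (fun hc => hgh ((Commute.conj_iff M).1 ((Commute.conj_iff M').1 hc))) hp hp2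
    (by rwa [hmul]) habs (left_ne_zero_of_mul (hmul ▸ hyz)) hx hg' hh' hN hNx
  refine .of_map (MulAut.conj M).toMonoidHom (.of_map (MulAut.conj M').toMonoidHom ?_)
  simp only [map_pow]
  exact hfree

lemma IsDiscreteSubgroup.isFreePair_pow (hΓ : IsDiscreteSubgroup Γ) (hgΓ : g ∈ Γ) (hhΓ : h ∈ Γ)
    (hgh : ¬Commute g h) (hx : 0 < x) (hg : g.1.trace = 2 * cosh x) (hh : h.1.trace = 2 * cosh x)
    (hN : 27 ≤ N) (hNx : 3 ≤ N * x) : IsFreePair (g ^ N) (h ^ N) := by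
  have hinv := coe_add_coe_inv h
  have hhinv : (h⁻¹).1.trace = 2 * cosh x := by
    have := congrArg trace hinv
    rw [trace_add, trace_smul, hh, trace_one, Fintype.card_fin, smul_eq_mul, Nat.cast_ofNat] at this
    linarith
  have hsum : (g * h).1.trace + (g * h⁻¹).1.trace = 4 * cosh x ^ 2 := by
    have := congrArg (fun X => (g.1 * X).trace) hinv
    rw [Matrix.mul_add, trace_add, mul_smul_comm, Matrix.mul_one, trace_smul, hg, hh] at this
    linear_combination this
  rcases le_total (2 * cosh x ^ 2) (g * h).1.trace with hle | hle
  · exact hΓ.isFreePair_pow_of_le_trace_mul hgΓ hhΓ hgh hx hg hh hle hN hNx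
  · have hfree := hΓ.isFreePair_pow_of_le_trace_mul hgΓ (Γ.inv_mem hhΓ)
      (Commute.inv_right_iff.not.2 hgh) hx hg hhinv (by linarith) hN hNx
    simpa using hfree.inv_right

end SymmetricPosition

lemma exists_center_mul_trace_eq_abs (g : SL2R) :
    ∃ ζ ∈ Subgroup.center SL2R, (ζ * g).1.trace = |g.1.trace| := by
  rcases abs_choice g.1.trace with h | h
  · exact ⟨1, one_mem _, by rw [one_mul, h]⟩
  · refine ⟨-1, Subgroup.mem_center_iff.2 fun k => by simp, ?_⟩
    rw [neg_one_mul, Matrix.SpecialLinearGroup.coe_neg, trace_neg, h]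

lemma commute_of_commute_center_mul {G : Type*} [Group G] {a b ζ ξ : G}
    (hζ : ζ ∈ Subgroup.center G) (hξ : ξ ∈ Subgroup.center G) (h : Commute (ζ * a) (ξ * b)) :
    Commute a b := by
  have hcent {c : G} (hc : c ∈ Subgroup.center G) (k : G) : Commute c⁻¹ k :=
    (Subgroup.mem_center_iff.1 (inv_mem hc) k).symm
  have := ((hcent hζ _).mul_left h).symm
  have := ((hcent hξ _).mul_left this).symm
  simpa using this

lemma virtuallyAbelian_closure_pair_of_commute {G : Type*} [Group G] {a b : G} (h : Commute a b) :
    VirtuallyAbelian (Subgroup.closure {a, b}) := by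
  have hcomm : IsMulCommutative (Subgroup.closure {a, b}) := Subgroup.isMulCommutative_closure <| by
    rintro _ (rfl | rfl) _ (rfl | rfl)
    exacts [rfl, h, h.symm, rfl]
  exact ⟨⊤, inferInstance, fun x _ y _ => mul_comm' x y⟩

theorem case1_free_powers_general {g h : SL2R} (hg : 2 < |g.1.trace|) (hh : 2 < |h.1.trace|)
    (hτ : translationLength g = translationLength h)
    (hdisc : IsDiscreteSubgroup (Subgroup.closure {g, h}))
    (hcomm : ¬Commute g h) {N : ℕ} (hN : 27 ≤ N) (hNτ : 6 ≤ N * translationLength g) :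
    IsFreePair (QuotientGroup.mk' (Subgroup.center SL2R) (g ^ N))
      (QuotientGroup.mk' (Subgroup.center SL2R) (h ^ N)) := by
  obtain ⟨ζ, hζ, hζg⟩ := exists_center_mul_trace_eq_abs g
  obtain ⟨ξ, hξ, hξh⟩ := exists_center_mul_trace_eq_abs h
  rw [abs_trace_eq_two_mul_cosh hg] at hζg
  rw [abs_trace_eq_two_mul_cosh hh, ← hτ] at hξh
  have hmem {k η : SL2R} (hk : k ∈ ({g, h} : Set SL2R)) (hη : η ∈ Subgroup.center SL2R) :
      η * k ∈ Subgroup.closure {g, h} ⊔ Subgroup.center SL2R :=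
    mul_mem (Subgroup.mem_sup_right hη) (Subgroup.mem_sup_left (Subgroup.subset_closure hk))
  have hfree : IsFreePair ((ζ * g) ^ N) ((ξ * h) ^ N) :=
    hdisc.sup_center.isFreePair_pow (hmem (.inl rfl) hζ) (hmem (.inr rfl) hξ)
      (fun hc => hcomm (commute_of_commute_center_mul hζ hξ hc))
      (by by_contra! h0; nlinarith) hζg hξh hN (by linarith)
  have hmk {k η : SL2R} (hη : η ∈ Subgroup.center SL2R) :
      QuotientGroup.mk' (Subgroup.center SL2R) ((η * k) ^ N) =
        QuotientGroup.mk' (Subgroup.center SL2R) (k ^ N) := by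
    have hη1 : QuotientGroup.mk' (Subgroup.center SL2R) η = 1 := (QuotientGroup.eq_one_iff η).2 hη
    rw [map_pow, map_pow, map_mul, hη1, one_mul]
  have hker : IsMulTorsion (QuotientGroup.mk' (Subgroup.center SL2R)).ker := by
    rw [QuotientGroup.ker_mk']
    exact isMulTorsion_center_specialLinearGroup
  simpa only [hmk hζ, hmk hξ] using hfree.map_of_isMulTorsion_ker hker

end Development

/-- Theorem 4.8 (thm:Case1) of the paper for `X = ℍ²`: for hyperbolic `g, h` with equal
translation lengths `τ ≥ λ` generating a discrete nonelementary subgroup, the images of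
`g^N, h^N` in `PSL(2,ℝ)` generate a free group of rank two, for the stated explicit `N`. -/
theorem case1_free_powers (ε : ℝ) (hε : 0 < ε) (hmarg : IsMargulisConstant ε)
    (δ L₁ : ℝ) (hδ : δ = Real.log (1 + Real.sqrt 2))
    (hL₁pos : 0 < L₁) (hL₁ : Real.sinh L₁ * Real.sinh (ε / 100) = 1)
    (lam : ℝ) (hlam : 0 < lam) (g h : SL2R)
    (hg : 2 < |Matrix.trace (g : Matrix (Fin 2) (Fin 2) ℝ)|)
    (hh : 2 < |Matrix.trace (h : Matrix (Fin 2) (Fin 2) ℝ)|)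
    (τ : ℝ) (hτg : translationLength g = τ) (hτh : translationLength h = τ)
    (hτ : lam ≤ τ)
    (hdisc : IsDiscreteSubgroup (Subgroup.closure {g, h}))
    (hne : ¬ VirtuallyAbelian ↥(Subgroup.closure ({g, h} : Set SL2R)))
    (N : ℕ)
    (hN : max ((5 + 2 * δ + 3 * L₁) / lam) (27 + 9 * (5 + 2 * δ) / L₁) ≤ (N : ℝ)) :
    Function.Injective
      ⇑(FreeGroup.lift
          ![QuotientGroup.mk' (Subgroup.center SL2R) (g ^ N),
            QuotientGroup.mk' (Subgroup.center SL2R) (h ^ N)] :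
        FreeGroup (Fin 2) →* SL2R ⧸ Subgroup.center SL2R) := by
  obtain ⟨hNlam, hNL₁⟩ := max_le_iff.1 hN
  have hδ2 : 1 / 2 < δ := by
    have hlog2 : Real.log 2 ≤ Real.log (1 + √2) :=
      Real.log_le_log two_pos (by linarith [Real.one_le_sqrt.2 one_le_two])
    linarith [Real.log_two_gt_d9]
  have hN27 : (27 : ℝ) ≤ N := (le_add_of_nonneg_right (by positivity)).trans hNL₁
  have hNτ : 6 ≤ N * translationLength g :=
    calc 6 ≤ 5 + 2 * δ + 3 * L₁ := by linarith
      _ ≤ N * lam := (div_le_iff₀ hlam).1 hNlam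
      _ ≤ N * translationLength g := by rw [hτg]; gcongr
  exact case1_free_powers_general hg hh (hτg.trans hτh.symm) hdisc
    (fun hc => hne (virtuallyAbelian_closure_pair_of_commute hc)) (by exact_mod_cast hN27) hNτ
end
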